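/- Assume condition (G) holds and that there exists ζ=(ξ,η) with φ(ζ)=1 and η<0 such that φ is finite in a neighbourhood of ζ and in a neighbourhood of (0,η); let v=E_ζ[S_1]/E_ζ[R_1]. Then V(ζ)>0, and for every a≥0 and b∈ℝ: for all sequences y_n→∞ and x_n>0 with (x_n−v y_n)/y_n^{1/2}→0, one has K_{a,b}(x_n,y_n) / ( x_n^{−1/2} e^{x_n ξ + y_n η} ) → D(a,b), where D(a,b)=C(a,b)·(2π V(ζ))^{−1/2}. -/

import Mathlib

open MeasureTheory Filter Set ENNReal

/-- Convolution of two measures on `ℝ × ℝ` (coordinatewise addition). -/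
noncomputable def mconv (μ ν : Measure (ℝ × ℝ)) : Measure (ℝ × ℝ) :=
  Measure.map (fun p : (ℝ × ℝ) × (ℝ × ℝ) => p.1 + p.2) (μ.prod ν)

/-- `n`-fold convolution power `F^{⋆n}` (with `F^{⋆0} = δ_{(0,0)}`). -/
noncomputable def iterConv (F : Measure (ℝ × ℝ)) : ℕ → Measure (ℝ × ℝ)
  | 0 => Measure.dirac 0
  | n + 1 => mconv (iterConv F n) F

/-- Bivariate Laplace transform `φ(u,w) = ∬ e^{-us-wr} F(ds,dr)`. -/
noncomputable def biLaplace (F : Measure (ℝ × ℝ)) (u w : ℝ) : ℝ≥0∞ :=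
  ∫⁻ p, ENNReal.ofReal (Real.exp (-(u * p.1 + w * p.2))) ∂F

/-- Topological support of a measure on `ℝ × ℝ`. -/
def msupport (F : Measure (ℝ × ℝ)) : Set (ℝ × ℝ) :=
  {p | ∀ U : Set (ℝ × ℝ), IsOpen U → p ∈ U → 0 < F U}

/-- `K_{a,b}(x,y) = P(N(x) < ∞, S_{N(x)} > x + a, R_{N(x)} ≥ y + b)` for the (possibly
killed) random walk with step distribution `F` and nonnegative steps: since the first
component is nondecreasing, `N(x) = n + 1` exactly when `S_n ≤ x < S_{n+1}`, so the
probability is the displayed renewal sum. -/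
noncomputable def hoglundK (F : Measure (ℝ × ℝ)) (a b x y : ℝ) : ℝ≥0∞ :=
  ∑' n : ℕ, ∫⁻ p in {p : ℝ × ℝ | p.1 ≤ x},
    F {q : ℝ × ℝ | x + a < p.1 + q.1 ∧ y + b ≤ p.2 + q.2} ∂(iterConv F n)

/-!
Tilting by `e^{-ξ s - η r}` turns `F` into a probability law `F_ζ` with exponential moments, and
condition (G) makes `F_ζ` nonlattice. In terms of `F_ζ`, the crossing probability at
`z = (x, y)` is `e^{⟨ζ, z⟩}` times the integral of a fixed weight against the renewal measure
`∑ n, F_ζ^{⋆n}` seen from `z`, so it suffices that `√x` times that renewal measure converges to a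
multiple of Lebesgue measure.

Against a positive kernel with compactly supported Fourier transform, each convolution power is
controlled by Fourier inversion, which gives a local limit theorem with uniform bounds. Near the
ray spanned by the mean, only the `n` within `O(√x)` of `x / E_ζ[S₁]` matter, and the sum over `n`
is a Riemann sum of a Gaussian along that ray. Modulating the kernel by characters does not affect
the argument, so Lévy's continuity theorem gives weak convergence of the renewal measure weighted
by the kernel. The crossing weight is dominated by that kernel with an integrable dependence on the
step, hence the limit can be taken under the integral over the step.
-/

/-! ### A strictly positive kernel with compactly supported Fourier transform -/

/-- The triangle function supported on `[-1, 1]`. -/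
noncomputable def triangle (θ : ℝ) : ℝ := max (1 - |θ|) 0

/-- The Fejér kernel `2 (1 - cos x) / x²`, written so that its value at `0` is `1`. It is the
Fourier transform of the triangle function. -/
noncomputable def fejer (x : ℝ) : ℝ := Real.sinc (x / 2) ^ 2

/-- Sum of two Fejér kernels shifted so that they have no common zero: a strictly positive
integrable kernel whose Fourier transform has compact support. -/
noncomputable def posKernel (x : ℝ) : ℝ := fejer x + fejer (x - Real.pi)

/-- The compactly supported function whose Fourier transform is `posKernel`. -/
noncomputable def posKernelHat (θ : ℝ) : ℂ :=
  triangle θ * (1 + Complex.exp ((-(Real.pi * θ) : ℝ) * Complex.I))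

lemma continuous_triangle : Continuous triangle := by
  unfold triangle
  fun_prop

lemma triangle_eq_zero {θ : ℝ} (hθ : θ ∉ Icc (-1 : ℝ) 1) : triangle θ = 0 := by
  rw [mem_Icc, ← abs_le, not_le] at hθ
  exact max_eq_right (by linarith)

lemma abs_triangle_le_one (θ : ℝ) : |triangle θ| ≤ 1 := by
  rw [triangle, abs_of_nonneg (le_max_right _ _)]
  exact max_le (by linarith [abs_nonneg θ]) zero_le_one

lemma integrable_triangle : Integrable triangle :=
  continuous_triangle.integrable_of_hasCompactSupport
    (HasCompactSupport.intro isCompact_Icc fun _ => triangle_eq_zero)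

lemma continuous_fejer : Continuous fejer := by
  unfold fejer
  exact (Real.continuous_sinc.comp (by fun_prop)).pow 2

lemma fejer_nonneg (x : ℝ) : 0 ≤ fejer x := sq_nonneg _

lemma fejer_le_one (x : ℝ) : fejer x ≤ 1 :=
  (sq_le_one_iff_abs_le_one _).2 (Real.abs_sinc_le_one _)

lemma fejer_zero : fejer 0 = 1 := by simp [fejer]

lemma sq_mul_fejer (x : ℝ) : x ^ 2 * fejer x = 2 * (1 - Real.cos x) := by
  rcases eq_or_ne x 0 with rfl | hx
  · simp
  · have hsin := Real.sin_sq_eq_half_sub (x / 2)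
    rw [mul_div_cancel₀ x two_ne_zero] at hsin
    rw [fejer, Real.sinc_of_ne_zero (div_ne_zero hx two_ne_zero), div_pow, hsin]
    field_simp

lemma one_add_sq_mul_fejer_le (x : ℝ) : (1 + x ^ 2) * fejer x ≤ 5 := by
  linarith [sq_mul_fejer x, fejer_le_one x, Real.neg_one_le_cos x]

lemma fejer_eq_intervalIntegral (x : ℝ) :
    fejer x = 2 * ∫ θ in (0 : ℝ)..1, (1 - θ) * Real.cos (θ * x) := by
  rcases eq_or_ne x 0 with rfl | hx
  · have : ∫ θ in (0 : ℝ)..1, (1 - θ) = 1 / 2 := by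
      rw [intervalIntegral.integral_sub (by simp) (by simp)]
      norm_num
    simp [fejer_zero, this]
  · have hderiv (θ : ℝ) : HasDerivAt
        (fun θ => (1 - θ) * Real.sin (θ * x) / x - Real.cos (θ * x) / x ^ 2)
        ((1 - θ) * Real.cos (θ * x)) θ := by
      have hlin := (hasDerivAt_id θ).mul_const x
      refine HasDerivAt.congr_deriv
        (((((hasDerivAt_id θ).const_sub 1).mul hlin.sin).div_const x).sub
          (hlin.cos.div_const (x ^ 2))) ?_
      simp only [id]
      field_simp
      ring
    rw [intervalIntegral.integral_eq_sub_of_hasDerivAt (fun θ _ => hderiv θ)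
      (Continuous.intervalIntegrable (by fun_prop) _ _)]
    refine mul_left_cancel₀ (pow_ne_zero 2 hx) ((sq_mul_fejer x).trans ?_)
    simp only [sub_self, zero_mul, zero_div, one_mul, Real.sin_zero, Real.cos_zero, mul_zero]
    field_simp
    ring

lemma integral_triangle_mul_cos (x : ℝ) :
    ∫ θ, triangle θ * Real.cos (θ * x) = fejer x := by
  have habs (θ : ℝ) : triangle θ * Real.cos (θ * x) = max (1 - |θ|) 0 * Real.cos (|θ| * x) := by
    rcases abs_choice θ with h | h <;> simp [triangle, h]
  simp_rw [habs]
  rw [integral_comp_abs (f := fun θ => max (1 - θ) 0 * Real.cos (θ * x)),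
    fejer_eq_intervalIntegral, intervalIntegral.integral_of_le zero_le_one,
    setIntegral_eq_of_subset_of_forall_sdiff_eq_zero measurableSet_Ioi
      (Ioc_subset_Ioi_self : Ioc (0 : ℝ) 1 ⊆ Ioi 0)]
  · congr 1
    refine setIntegral_congr_fun measurableSet_Ioc fun θ hθ => ?_
    simp [max_eq_left (sub_nonneg.2 hθ.2)]
  · rintro θ ⟨hpos, hθ⟩
    have : 1 < θ := not_le.1 fun h => hθ ⟨hpos, h⟩
    simp [max_eq_right (sub_nonpos.2 this.le)]

lemma integrable_triangle_mul_exp (x : ℝ) :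
    Integrable fun θ : ℝ => (triangle θ : ℂ) * Complex.exp ((θ * x : ℝ) * Complex.I) :=
  integrable_triangle.ofReal.mul_bdd (c := 1) (by fun_prop)
    (ae_of_all _ fun θ => (Complex.norm_exp_ofReal_mul_I _).le)

lemma ofReal_fejer (x : ℝ) :
    (fejer x : ℂ) = ∫ θ : ℝ, (triangle θ : ℂ) * Complex.exp ((θ * x : ℝ) * Complex.I) := by
  set f : ℝ → ℂ := fun θ => (triangle θ : ℂ) * Complex.exp ((θ * x : ℝ) * Complex.I) with hf
  have hsymm (θ : ℝ) : f θ + f (-θ) = 2 * ((triangle θ * Real.cos (θ * x) : ℝ) : ℂ) := by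
    have htwo := Complex.two_cos ((θ * x : ℝ) : ℂ)
    simp only [hf, triangle, abs_neg, neg_mul, Complex.ofReal_neg, Complex.ofReal_mul,
      Complex.ofReal_cos] at htwo ⊢
    linear_combination -(max (1 - |θ|) 0 : ℝ) * htwo
  have hint : Integrable f := integrable_triangle_mul_exp x
  have htwice : 2 * ∫ θ, f θ = 2 * (fejer x : ℂ) := by
    calc 2 * ∫ θ, f θ = ∫ θ, (f θ + f (-θ)) := by
          rw [integral_add hint hint.comp_neg, integral_neg_eq_self f volume, two_mul]
      _ = 2 * (fejer x : ℂ) := by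
          simp_rw [hsymm]
          rw [integral_const_mul, integral_complex_ofReal, integral_triangle_mul_cos]
  exact (mul_left_cancel₀ two_ne_zero htwice).symm

lemma continuous_posKernelHat : Continuous posKernelHat := by
  unfold posKernelHat
  have := continuous_triangle
  fun_prop

lemma posKernelHat_eq_zero {θ : ℝ} (hθ : θ ∉ Icc (-1 : ℝ) 1) : posKernelHat θ = 0 := by
  simp [posKernelHat, triangle_eq_zero hθ]

lemma integrable_posKernelHat : Integrable posKernelHat :=
  continuous_posKernelHat.integrable_of_hasCompactSupport
    (HasCompactSupport.intro isCompact_Icc fun _ => posKernelHat_eq_zero)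

lemma norm_posKernelHat_le (θ : ℝ) : ‖posKernelHat θ‖ ≤ 2 := by
  have hexp : ‖1 + Complex.exp ((-(Real.pi * θ) : ℝ) * Complex.I)‖ ≤ 2 :=
    (norm_add_le _ _).trans (by rw [Complex.norm_exp_ofReal_mul_I]; norm_num)
  calc ‖posKernelHat θ‖
      = |triangle θ| * ‖1 + Complex.exp ((-(Real.pi * θ) : ℝ) * Complex.I)‖ := by
        rw [posKernelHat, norm_mul, Complex.norm_real, Real.norm_eq_abs]
    _ ≤ 1 * 2 := mul_le_mul (abs_triangle_le_one θ) hexp (norm_nonneg _) zero_le_one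
    _ = 2 := one_mul 2

lemma continuous_posKernel : Continuous posKernel :=
  continuous_fejer.add (continuous_fejer.comp (continuous_id.sub continuous_const))

lemma posKernel_nonneg (x : ℝ) : 0 ≤ posKernel x :=
  add_nonneg (fejer_nonneg _) (fejer_nonneg _)

lemma pi_sq_lt_ten : Real.pi ^ 2 < 10 := by
  nlinarith [Real.pi_lt_d2, Real.pi_pos]

lemma one_add_sq_mul_posKernel_le (x : ℝ) : (1 + x ^ 2) * posKernel x ≤ 115 := by
  have hshift : 1 + x ^ 2 ≤ 22 * (1 + (x - Real.pi) ^ 2) := by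
    nlinarith [sq_nonneg (x - 2 * Real.pi), pi_sq_lt_ten]
  have := mul_le_mul_of_nonneg_right hshift (fejer_nonneg (x - Real.pi))
  rw [posKernel, mul_add]
  linarith [one_add_sq_mul_fejer_le x, one_add_sq_mul_fejer_le (x - Real.pi)]

lemma posKernel_le (x : ℝ) : posKernel x ≤ 115 := by
  nlinarith [one_add_sq_mul_posKernel_le x, mul_nonneg (sq_nonneg x) (posKernel_nonneg x)]

lemma posKernel_mul_sq_le (x : ℝ) : posKernel x * x ^ 2 ≤ 115 := by
  nlinarith [one_add_sq_mul_posKernel_le x, posKernel_nonneg x]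

-- The numerators `1 - cos x` and `1 + cos x` of the two Fejér kernels add up to a constant.
lemma one_le_mul_posKernel (x : ℝ) : 1 ≤ 5 * (1 + x ^ 2) * posKernel x := by
  have hshift : (x - Real.pi) ^ 2 ≤ 20 * (1 + x ^ 2) := by
    nlinarith [sq_nonneg (x + Real.pi), pi_sq_lt_ten]
  have hcos := sq_mul_fejer (x - Real.pi)
  rw [Real.cos_sub_pi] at hcos
  have h₁ := mul_le_mul_of_nonneg_right hshift (fejer_nonneg (x - Real.pi))
  have h₂ : x ^ 2 * fejer x ≤ 20 * (1 + x ^ 2) * fejer x :=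
    mul_le_mul_of_nonneg_right (by nlinarith [sq_nonneg x]) (fejer_nonneg x)
  rw [posKernel]
  linarith [sq_mul_fejer x]

lemma posKernel_pos (x : ℝ) : 0 < posKernel x :=
  pos_of_mul_pos_right (one_pos.trans_le (one_le_mul_posKernel x)) (by positivity)

lemma integrable_posKernel : Integrable posKernel := by
  refine (integrable_inv_one_add_sq.const_mul 115).mono'
    continuous_posKernel.aestronglyMeasurable (ae_of_all _ fun x => ?_)
  rw [Real.norm_of_nonneg (posKernel_nonneg x), ← div_eq_mul_inv, le_div_iff₀ (by positivity),
    mul_comm]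
  exact one_add_sq_mul_posKernel_le x

lemma ofReal_posKernel (x : ℝ) :
    (posKernel x : ℂ) = ∫ θ : ℝ, posKernelHat θ * Complex.exp ((θ * x : ℝ) * Complex.I) := by
  rw [posKernel, Complex.ofReal_add, ofReal_fejer, ofReal_fejer,
    ← integral_add (integrable_triangle_mul_exp _) (integrable_triangle_mul_exp _)]
  refine integral_congr_ae (ae_of_all _ fun θ => ?_)
  have hshift : Complex.exp ((θ * (x - Real.pi) : ℝ) * Complex.I) =
      Complex.exp ((-(Real.pi * θ) : ℝ) * Complex.I) * Complex.exp ((θ * x : ℝ) * Complex.I) := by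
    rw [← Complex.exp_add]
    congr 1
    push_cast
    ring
  simp only [posKernelHat, hshift]
  ring

open FourierTransform in
lemma fourier_posKernelHat (u : ℝ) : 𝓕 posKernelHat u = posKernel (-(2 * Real.pi) * u) := by
  rw [ofReal_posKernel, Real.fourier_real_eq_integral_exp_smul]
  refine integral_congr_ae (ae_of_all _ fun θ => ?_)
  simp only [smul_eq_mul]
  ring_nf

open FourierTransform in
lemma integral_posKernel_mul_exp (s : ℝ) :
    ∫ x : ℝ, (posKernel x : ℂ) * Complex.exp ((x * s : ℝ) * Complex.I) =
      2 * Real.pi * posKernelHat (-s) := by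
  have hF : 𝓕 posKernelHat = fun u => (posKernel (-(2 * Real.pi) * u) : ℂ) :=
    funext fourier_posKernelHat
  have hint : Integrable (𝓕 posKernelHat) := by
    rw [hF]
    exact (integrable_posKernel.comp_mul_left' (by simp [Real.pi_ne_zero])).ofReal
  have hinv := integrable_posKernelHat.fourierInv_fourier_eq hint
    continuous_posKernelHat.continuousAt (v := -s)
  rw [Real.fourierInv_eq_fourier_neg, Real.fourier_real_eq_integral_exp_smul, neg_neg, hF] at hinv
  have hscale := Measure.integral_comp_mul_left
    (fun x : ℝ => (posKernel x : ℂ) * Complex.exp ((x * s : ℝ) * Complex.I)) (-(2 * Real.pi))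
  rw [abs_inv, abs_neg, abs_of_pos Real.two_pi_pos, Complex.real_smul] at hscale
  have hpi : (Real.pi : ℂ) ≠ 0 := by exact_mod_cast Real.pi_ne_zero
  calc ∫ x : ℝ, (posKernel x : ℂ) * Complex.exp ((x * s : ℝ) * Complex.I)
      = 2 * Real.pi * ∫ u : ℝ, (posKernel (-(2 * Real.pi) * u) : ℂ) *
          Complex.exp ((-(2 * Real.pi) * u * s : ℝ) * Complex.I) := by
        rw [hscale, ← mul_assoc]
        push_cast
        rw [mul_inv_cancel₀ (mul_ne_zero two_ne_zero hpi), one_mul]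
    _ = 2 * Real.pi * posKernelHat (-s) := by
        rw [← hinv]
        congr 2 with u
        rw [smul_eq_mul, mul_comm]
        ring_nf

/-! ### Characteristic functions of nonlattice laws on the plane -/

/-- The Euclidean pairing `⟨θ, p⟩ = θ₁ p₁ + θ₂ p₂`; the product norm on `ℝ × ℝ` is the sup norm,
so that `ℝ × ℝ` carries no inner product. -/
noncomputable def pairing : (ℝ × ℝ) →L[ℝ] StrongDual ℝ (ℝ × ℝ) :=
  (ContinuousLinearMap.fst ℝ ℝ ℝ).smulRight (ContinuousLinearMap.fst ℝ ℝ ℝ) +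
    (ContinuousLinearMap.snd ℝ ℝ ℝ).smulRight (ContinuousLinearMap.snd ℝ ℝ ℝ)

/-- The characteristic function `θ ↦ ∫ exp(i⟨θ, p⟩) dμ(p)` of a measure on the plane. -/
noncomputable def charFn (μ : Measure (ℝ × ℝ)) (θ : ℝ × ℝ) : ℂ := charFunDual μ (pairing θ)

/-- A law on the plane is nonlattice if its characteristic function has modulus less than one away
from the origin; in particular it is carried neither by a line nor by a coset of a proper closed
subgroup. -/
def IsNonlattice (μ : Measure (ℝ × ℝ)) : Prop := ∀ θ : ℝ × ℝ, θ ≠ 0 → ‖charFn μ θ‖ < 1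

lemma pairing_apply (θ p : ℝ × ℝ) : pairing θ p = θ.1 * p.1 + θ.2 * p.2 := rfl

lemma abs_pairing_le (θ p : ℝ × ℝ) : |pairing θ p| ≤ 2 * (‖θ‖ * ‖p‖) := by
  have h₁ := mul_le_mul (norm_fst_le θ) (norm_fst_le p) (norm_nonneg _) (norm_nonneg _)
  have h₂ := mul_le_mul (norm_snd_le θ) (norm_snd_le p) (norm_nonneg _) (norm_nonneg _)
  calc |pairing θ p| ≤ |θ.1 * p.1| + |θ.2 * p.2| := abs_add_le _ _
    _ ≤ 2 * (‖θ‖ * ‖p‖) := by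
      rw [abs_mul, abs_mul, two_mul]
      exact add_le_add h₁ h₂

lemma charFn_apply (μ : Measure (ℝ × ℝ)) (θ : ℝ × ℝ) :
    charFn μ θ = ∫ p, Complex.exp (pairing θ p * Complex.I) ∂μ :=
  charFunDual_apply _

lemma charFn_zero (μ : Measure (ℝ × ℝ)) : charFn μ 0 = μ.real univ := by
  simp [charFn_apply]

lemma integrable_exp_mul_I {α : Type*} {mα : MeasurableSpace α} (μ : Measure α) [IsFiniteMeasure μ]
    {f : α → ℝ} (hf : AEStronglyMeasurable f μ) :
    Integrable (fun a => Complex.exp (f a * Complex.I)) μ :=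
  Integrable.of_bound (C := 1)
    (by exact (Complex.continuous_exp.comp (Complex.continuous_ofReal.mul
      continuous_const)).comp_aestronglyMeasurable hf)
    (ae_of_all _ fun a => (Complex.norm_exp_ofReal_mul_I (f a)).le)

lemma continuous_charFn (μ : Measure (ℝ × ℝ)) [IsFiniteMeasure μ] : Continuous (charFn μ) := by
  have heq : charFn μ = fun θ => ∫ p, Complex.exp (pairing θ p * Complex.I) ∂μ :=
    funext (charFn_apply μ)
  rw [heq]
  refine continuous_of_dominated (bound := fun _ => 1) (fun θ => ?_) (fun θ => ?_)
    (integrable_const _) (ae_of_all _ fun p => by fun_prop)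
  · exact Continuous.aestronglyMeasurable (by fun_prop)
  · exact ae_of_all _ fun p => (Complex.norm_exp_ofReal_mul_I _).le

lemma one_sub_norm_charFn_sq (μ : Measure (ℝ × ℝ)) [IsProbabilityMeasure μ] (θ : ℝ × ℝ) :
    1 - ‖charFn μ θ‖ ^ 2 =
      ∫ x : (ℝ × ℝ) × (ℝ × ℝ), (1 - Real.cos (pairing θ (x.1 - x.2))) ∂(μ.prod μ) := by
  have hprod : ((‖charFn μ θ‖ ^ 2 : ℝ) : ℂ) =
      ∫ x : (ℝ × ℝ) × (ℝ × ℝ), Complex.exp (pairing θ (x.1 - x.2) * Complex.I) ∂(μ.prod μ) := by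
    rw [← Complex.normSq_eq_norm_sq, ← Complex.mul_conj, charFn_apply, ← integral_conj,
      ← integral_prod_mul]
    refine integral_congr_ae (ae_of_all _ fun x => ?_)
    simp only [← Complex.exp_conj, ← Complex.exp_add, map_mul, Complex.conj_ofReal, Complex.conj_I,
      map_sub, Complex.ofReal_sub]
    ring_nf
  have hint := integrable_exp_mul_I (μ.prod μ) (f := fun x => pairing θ (x.1 - x.2))
    (Continuous.aestronglyMeasurable (by fun_prop))
  have hre := congrArg Complex.re hprod
  rw [Complex.ofReal_re, ← RCLike.re_to_complex, ← integral_re hint] at hre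
  simp only [RCLike.re_to_complex, Complex.exp_ofReal_mul_I_re] at hre
  rw [hre, integral_sub (integrable_const _) ?_]
  · simp
  · simpa only [RCLike.re_to_complex, Complex.exp_ofReal_mul_I_re] using hint.re

/-- The quotient `(1 - ‖charFn μ (ρ u)‖²) / ρ²`, in a form that extends continuously to `ρ = 0`. -/
noncomputable def charFnDefect (μ : Measure (ℝ × ℝ)) (y : ℝ × (ℝ × ℝ)) : ℝ :=
  ∫ x : (ℝ × ℝ) × (ℝ × ℝ),
    pairing y.2 (x.1 - x.2) ^ 2 / 2 * fejer (y.1 * pairing y.2 (x.1 - x.2)) ∂(μ.prod μ)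

section CharFnBound

variable {μ : Measure (ℝ × ℝ)} [IsProbabilityMeasure μ]

lemma one_sub_norm_charFn_smul_sq (ρ : ℝ) (u : ℝ × ℝ) :
    1 - ‖charFn μ (ρ • u)‖ ^ 2 = ρ ^ 2 * charFnDefect μ (ρ, u) := by
  rw [one_sub_norm_charFn_sq, charFnDefect, ← integral_const_mul]
  refine integral_congr_ae (ae_of_all _ fun x => ?_)
  have := sq_mul_fejer (ρ * pairing u (x.1 - x.2))
  simp only [map_smul, smul_apply, smul_eq_mul]
  linarith

lemma charFnDefect_integrand_bound {y : ℝ × (ℝ × ℝ)} (hy : ‖y.2‖ = 1)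
    (x : (ℝ × ℝ) × (ℝ × ℝ)) :
    ‖pairing y.2 (x.1 - x.2) ^ 2 / 2 * fejer (y.1 * pairing y.2 (x.1 - x.2))‖ ≤
      4 * (‖x.1‖ ^ 2 + ‖x.2‖ ^ 2) := by
  have hpair : pairing y.2 (x.1 - x.2) ^ 2 ≤ (2 * (‖x.1‖ + ‖x.2‖)) ^ 2 := by
    refine sq_le_sq' (neg_le_of_abs_le ?_) (le_of_abs_le ?_) <;>
    · refine (abs_pairing_le _ _).trans ?_
      rw [hy, one_mul]
      gcongr
      exact norm_sub_le _ _
  have hf₀ := fejer_nonneg (y.1 * pairing y.2 (x.1 - x.2))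
  rw [Real.norm_of_nonneg (by positivity)]
  refine (mul_le_of_le_one_right (by positivity) (fejer_le_one _)).trans ?_
  nlinarith [sq_nonneg (‖x.1‖ - ‖x.2‖)]

lemma integrable_norm_sq_add_norm_sq (hμ : MemLp id 2 μ) :
    Integrable (fun x : (ℝ × ℝ) × (ℝ × ℝ) => 4 * (‖x.1‖ ^ 2 + ‖x.2‖ ^ 2)) (μ.prod μ) := by
  have hsq : Integrable (fun p : ℝ × ℝ => ‖p‖ ^ 2) μ := hμ.integrable_norm_pow two_ne_zero
  exact ((hsq.comp_fst μ).add (hsq.comp_snd μ)).const_mul 4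

lemma continuousOn_charFnDefect (hμ : MemLp id 2 μ) :
    ContinuousOn (charFnDefect μ) {y | ‖y.2‖ = 1} := by
  have := continuous_fejer
  refine continuousOn_of_dominated (fun y _ => Continuous.aestronglyMeasurable (by fun_prop))
    (fun y hy => ae_of_all _ (charFnDefect_integrand_bound hy))
    (integrable_norm_sq_add_norm_sq hμ) (ae_of_all _ fun x => Continuous.continuousOn (by fun_prop))

lemma IsNonlattice.charFnDefect_pos (hnl : IsNonlattice μ) (hμ : MemLp id 2 μ) {y : ℝ × (ℝ × ℝ)}
    (hy : ‖y.2‖ = 1) : 0 < charFnDefect μ y := by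
  obtain ⟨ρ, u⟩ := y
  have hu : u ≠ 0 := norm_ne_zero_iff.1 (by rw [hy]; exact one_ne_zero)
  have hdef (θ : ℝ × ℝ) (hθ : θ ≠ 0) : 0 < 1 - ‖charFn μ θ‖ ^ 2 := by
    nlinarith [hnl θ hθ, norm_nonneg (charFn μ θ)]
  rcases eq_or_ne ρ 0 with rfl | hρ
  · have hnonneg (x : (ℝ × ℝ) × (ℝ × ℝ)) :
        0 ≤ pairing u (x.1 - x.2) ^ 2 / 2 * fejer (0 * pairing u (x.1 - x.2)) :=
      mul_nonneg (by positivity) (fejer_nonneg _)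
    have := continuous_fejer
    have hint : Integrable (fun x : (ℝ × ℝ) × (ℝ × ℝ) =>
        pairing u (x.1 - x.2) ^ 2 / 2 * fejer (0 * pairing u (x.1 - x.2))) (μ.prod μ) :=
      (integrable_norm_sq_add_norm_sq hμ).mono' (Continuous.aestronglyMeasurable (by fun_prop))
        (ae_of_all _ (charFnDefect_integrand_bound (y := (0, u)) hy))
    refine (integral_nonneg hnonneg).lt_of_ne fun hzero => (hdef u hu).ne' ?_
    rw [one_sub_norm_charFn_sq]
    refine integral_eq_zero_of_ae ?_
    filter_upwards [(integral_eq_zero_iff_of_nonneg hnonneg hint).1 hzero.symm] with x hx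
    have hpair : pairing u (x.1 - x.2) = 0 := by simpa [fejer_zero] using hx
    simp [hpair]
  · have hpos := hdef (ρ • u) (smul_ne_zero hρ hu)
    rw [one_sub_norm_charFn_smul_sq] at hpos
    exact pos_of_mul_pos_right hpos (sq_nonneg _)

lemma IsNonlattice.exists_norm_charFn_le_exp (hnl : IsNonlattice μ) (hμ : MemLp id 2 μ) (T : ℝ) :
    ∃ c > 0, ∀ θ, ‖θ‖ ≤ T → ‖charFn μ θ‖ ≤ Real.exp (-(c * ‖θ‖ ^ 2)) := by
  have hK : IsCompact (Icc 0 T ×ˢ Metric.sphere (0 : ℝ × ℝ) 1) :=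
    isCompact_Icc.prod (isCompact_sphere 0 1)
  have hsphere {y : ℝ × (ℝ × ℝ)} (hy : y ∈ Icc 0 T ×ˢ Metric.sphere (0 : ℝ × ℝ) 1) :
      ‖y.2‖ = 1 := mem_sphere_zero_iff_norm.1 hy.2
  obtain ⟨c, hc, hcK⟩ := hK.exists_forall_le' ((continuousOn_charFnDefect hμ).mono fun y => hsphere)
    fun y hy => hnl.charFnDefect_pos hμ (hsphere hy)
  refine ⟨c / 2, half_pos hc, fun θ hθ => ?_⟩
  rcases eq_or_ne θ 0 with rfl | h0
  · simp [charFn_zero]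
  have hnorm : 0 < ‖θ‖ := norm_pos_iff.2 h0
  have hunit : ‖‖θ‖⁻¹ • θ‖ = 1 := by
    rw [norm_smul, norm_inv, norm_norm, inv_mul_cancel₀ hnorm.ne']
  have hdefect := one_sub_norm_charFn_smul_sq (μ := μ) ‖θ‖ (‖θ‖⁻¹ • θ)
  rw [smul_inv_smul₀ hnorm.ne'] at hdefect
  have hlower := mul_le_mul_of_nonneg_left
    (hcK (‖θ‖, ‖θ‖⁻¹ • θ) ⟨⟨hnorm.le, hθ⟩, mem_sphere_zero_iff_norm.2 hunit⟩) (sq_nonneg ‖θ‖)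
  refine (pow_le_pow_iff_left₀ (norm_nonneg _) (Real.exp_pos _).le two_ne_zero).1 ?_
  calc ‖charFn μ θ‖ ^ 2 ≤ -(c * ‖θ‖ ^ 2) + 1 := by linarith
    _ ≤ Real.exp (-(c * ‖θ‖ ^ 2)) := Real.add_one_le_exp _
    _ = Real.exp (-(c / 2 * ‖θ‖ ^ 2)) ^ 2 := by
      rw [← Real.exp_nat_mul]
      push_cast
      ring_nf

end CharFnBound

/-! ### The central limit theorem and moments of convolution powers -/

section CentralLimit

open ProbabilityTheory

variable {E : Type*} [NormedAddCommGroup E] [NormedSpace ℝ E] [MeasurableSpace E] {μ : Measure E}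

lemma exp_mul_charFunDual_smul (L : StrongDual ℝ E) (s m : ℝ) :
    Complex.exp (-(s * m : ℝ) * Complex.I) * charFunDual μ (s • L) =
      ∫ p, Complex.exp ((s * (L p - m) : ℝ) * Complex.I) ∂μ := by
  rw [charFunDual_apply, ← integral_const_mul]
  refine integral_congr_ae (ae_of_all _ fun p => ?_)
  simp only [← Complex.exp_add, smul_apply, smul_eq_mul]
  push_cast
  ring_nf

variable [BorelSpace E] [IsProbabilityMeasure μ]

lemma tendsto_centered_charFunDual_pow (L : StrongDual ℝ E) (hL : MemLp L 2 μ) :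
    Tendsto (fun n : ℕ => (Complex.exp (-((√n)⁻¹ * μ[L] : ℝ) * Complex.I) *
      charFunDual μ ((√n)⁻¹ • L)) ^ n) atTop (nhds (Complex.exp (-Var[L; μ] / 2))) := by
  simp only [exp_mul_charFunDual_smul]
  rcases (variance_nonneg L μ).eq_or_lt with hvar | hvar
  · have hcentered (s : ℝ) : ∫ p, Complex.exp ((s * (L p - μ[L]) : ℝ) * Complex.I) ∂μ = 1 := by
      rw [integral_congr_ae (g := fun _ => 1)]
      · simp
      · filter_upwards [ae_eq_integral_of_variance_eq_zero hL hvar.symm] with p hp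
        simp [hp]
    simp only [hcentered, one_pow, ← hvar, Complex.ofReal_zero, neg_zero, zero_div,
      Complex.exp_zero, tendsto_const_nhds]
  have hσ : 0 < √Var[L; μ] := Real.sqrt_pos.2 hvar
  have hLm : AEMeasurable L μ := L.continuous.measurable.aemeasurable
  have hint : Integrable L μ := hL.integrable one_le_two
  have hclt := tendsto_charFun_inv_sqrt_mul_pow (P := μ)
    (X := fun p => (√Var[L; μ])⁻¹ * (L p - μ[L])) ((hLm.sub_const _).const_mul _) ?_ ?_ √Var[L; μ]
  · rw [← Complex.ofReal_pow, Real.sq_sqrt hvar.le] at hclt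
    refine hclt.congr fun n => ?_
    rw [charFun_apply_real, integral_map ((hLm.sub_const _).const_mul _)
      (Continuous.aestronglyMeasurable (by fun_prop))]
    congr 2 with p
    rw [← Complex.ofReal_mul, mul_assoc, mul_inv_cancel_left₀ hσ.ne']
  · rw [integral_const_mul, integral_sub hint (integrable_const _)]
    simp
  · simp only [Pi.pow_apply, mul_pow]
    rw [integral_const_mul, ← variance_eq_integral hLm, inv_pow, Real.sq_sqrt hvar.le,
      inv_mul_cancel₀ hvar.ne']

end CentralLimit

lemma memLp_dual {μ : Measure (ℝ × ℝ)} (hμ : MemLp id 2 μ) (L : StrongDual ℝ (ℝ × ℝ)) :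
    MemLp L 2 μ :=
  L.comp_memLp' hμ

section ConvolutionPowers

open ProbabilityTheory

variable {μ : Measure (ℝ × ℝ)}

lemma iterConv_succ (n : ℕ) : iterConv μ (n + 1) = Measure.conv (iterConv μ n) μ := rfl

variable [IsProbabilityMeasure μ]

instance isProbabilityMeasure_iterConv (n : ℕ) : IsProbabilityMeasure (iterConv μ n) := by
  induction n with
  | zero => exact Measure.dirac.isProbabilityMeasure
  | succ n ih =>
    rw [iterConv_succ]
    infer_instance

lemma iterConv_add (a b : ℕ) :
    iterConv μ (a + b) = Measure.conv (iterConv μ a) (iterConv μ b) := by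
  induction b with
  | zero => exact (Measure.conv_dirac_zero _).symm
  | succ b ih => rw [← add_assoc, iterConv_succ, ih, iterConv_succ, Measure.conv_assoc]

lemma charFn_iterConv (n : ℕ) (θ : ℝ × ℝ) : charFn (iterConv μ n) θ = charFn μ θ ^ n := by
  induction n with
  | zero => simp [charFn, iterConv, charFunDual_dirac]
  | succ n ih =>
    rw [pow_succ, ← ih, iterConv_succ]
    exact charFunDual_conv _

lemma memLp_iterConv (hμ : MemLp id 2 μ) (n : ℕ) : MemLp id 2 (iterConv μ n) := by
  induction n with
  | zero =>
    refine MemLp.of_bound aestronglyMeasurable_id 0 ?_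
    rw [iterConv, ae_dirac_eq]
    exact norm_zero.le
  | succ n ih =>
    rw [iterConv_succ, Measure.conv,
      memLp_map_measure_iff aestronglyMeasurable_id (by fun_prop)]
    exact (ih.comp_fst μ).add (hμ.comp_snd (iterConv μ n))

lemma integral_iterConv (L : StrongDual ℝ (ℝ × ℝ)) (hμ : MemLp id 2 μ) (n : ℕ) :
    ∫ p, L p ∂(iterConv μ n) = n * ∫ p, L p ∂μ := by
  have hint (k : ℕ) : Integrable L (iterConv μ k) :=
    (memLp_dual (memLp_iterConv hμ k) L).integrable one_le_two
  have hintμ : Integrable L μ := (memLp_dual hμ L).integrable one_le_two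
  induction n with
  | zero => simp [iterConv]
  | succ n ih =>
    rw [iterConv_succ, integral_conv (hint (n + 1))]
    simp only [map_add, integral_add (integrable_const _) hintμ, integral_const, probReal_univ,
      one_smul]
    rw [integral_add (hint n) (integrable_const _), ih, integral_const, probReal_univ, one_smul]
    push_cast
    ring

lemma variance_iterConv (L : StrongDual ℝ (ℝ × ℝ)) (hμ : MemLp id 2 μ) (n : ℕ) :
    Var[L; iterConv μ n] = n * Var[L; μ] := by
  induction n with
  | zero => simp [iterConv]
  | succ n ih =>
    rw [iterConv_succ, Measure.conv, variance_map L.continuous.aemeasurable (by fun_prop)]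
    have hadd : L ∘ (fun x : (ℝ × ℝ) × (ℝ × ℝ) => x.1 + x.2) = fun x => L x.1 + L x.2 :=
      funext fun x => map_add L x.1 x.2
    rw [hadd, variance_add_prod (memLp_dual (memLp_iterConv hμ n) L) (memLp_dual hμ L), ih]
    push_cast
    ring

end ConvolutionPowers

/-! ### The local limit theorem -/

/-- The kernel `planeKernel z = posKernel z.1 * posKernel z.2` on the plane, which plays the part of
a smoothed indicator function of a neighbourhood of the origin. -/
noncomputable def planeKernel (z : ℝ × ℝ) : ℝ := posKernel z.1 * posKernel z.2

/-- The compactly supported function whose inverse Fourier transform is `planeKernel`. -/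
noncomputable def planeKernelHat (θ : ℝ × ℝ) : ℂ := posKernelHat θ.1 * posKernelHat θ.2

@[fun_prop]
lemma continuous_planeKernel : Continuous planeKernel :=
  (continuous_posKernel.comp continuous_fst).mul (continuous_posKernel.comp continuous_snd)

@[fun_prop]
lemma continuous_planeKernelHat : Continuous planeKernelHat :=
  (continuous_posKernelHat.comp continuous_fst).mul (continuous_posKernelHat.comp continuous_snd)

lemma planeKernel_pos (z : ℝ × ℝ) : 0 < planeKernel z := mul_pos (posKernel_pos _) (posKernel_pos _)

lemma planeKernel_le (z : ℝ × ℝ) : planeKernel z ≤ 115 ^ 2 := by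
  rw [sq]
  exact mul_le_mul (posKernel_le _) (posKernel_le _) (posKernel_nonneg _) (by norm_num)

lemma norm_planeKernel_le (z : ℝ × ℝ) : ‖planeKernel z‖ ≤ 115 ^ 2 := by
  rw [Real.norm_of_nonneg (planeKernel_pos z).le]
  exact planeKernel_le z

lemma planeKernel_mul_fst_sq_le (z : ℝ × ℝ) : planeKernel z * z.1 ^ 2 ≤ 115 ^ 2 := by
  calc planeKernel z * z.1 ^ 2 = posKernel z.1 * z.1 ^ 2 * posKernel z.2 := mul_right_comm _ _ _
    _ ≤ 115 * 115 := mul_le_mul (posKernel_mul_sq_le _) (posKernel_le _) (posKernel_nonneg _)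
      (by norm_num)
    _ = 115 ^ 2 := (sq _).symm

lemma integrable_planeKernel : Integrable planeKernel :=
  integrable_posKernel.mul_prod integrable_posKernel

lemma integrable_planeKernelHat : Integrable planeKernelHat :=
  integrable_posKernelHat.mul_prod integrable_posKernelHat

lemma norm_planeKernelHat_le (θ : ℝ × ℝ) : ‖planeKernelHat θ‖ ≤ 4 := by
  calc ‖planeKernelHat θ‖ = ‖posKernelHat θ.1‖ * ‖posKernelHat θ.2‖ := norm_mul _ _
    _ ≤ 2 * 2 := mul_le_mul (norm_posKernelHat_le _) (norm_posKernelHat_le _) (norm_nonneg _)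
      zero_le_two
    _ = 4 := by norm_num

lemma planeKernelHat_eq_zero {θ : ℝ × ℝ} (hθ : 1 < ‖θ‖) : planeKernelHat θ = 0 := by
  rcases lt_max_iff.1 hθ with h | h
  · rw [planeKernelHat, posKernelHat_eq_zero fun hmem => h.not_ge (abs_le.2 hmem), zero_mul]
  · rw [planeKernelHat, posKernelHat_eq_zero fun hmem => h.not_ge (abs_le.2 hmem), mul_zero]

lemma ofReal_planeKernel (z : ℝ × ℝ) :
    (planeKernel z : ℂ) = ∫ θ, planeKernelHat θ * Complex.exp (pairing θ z * Complex.I) := by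
  rw [planeKernel, Complex.ofReal_mul, ofReal_posKernel, ofReal_posKernel, ← integral_prod_mul]
  refine integral_congr_ae (ae_of_all _ fun θ => ?_)
  simp only [planeKernelHat, pairing_apply, Complex.ofReal_add, add_mul, Complex.exp_add]
  ring

lemma planeKernel_mul_exp (θ₀ z : ℝ × ℝ) :
    planeKernel z * Complex.exp (pairing θ₀ z * Complex.I) =
      ∫ θ, planeKernelHat (θ - θ₀) * Complex.exp (pairing θ z * Complex.I) := by
  rw [ofReal_planeKernel, ← integral_mul_const, ← integral_sub_right_eq_self _ θ₀]
  refine integral_congr_ae (ae_of_all _ fun θ => ?_)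
  simp only [mul_assoc, ← Complex.exp_add, map_sub, sub_apply, Complex.ofReal_sub]
  ring_nf

lemma integral_planeKernel_mul_exp (θ₀ : ℝ × ℝ) :
    ∫ z, planeKernel z * Complex.exp (pairing θ₀ z * Complex.I) =
      (2 * Real.pi) ^ 2 * planeKernelHat (-θ₀) := by
  calc ∫ z, planeKernel z * Complex.exp (pairing θ₀ z * Complex.I)
      = ∫ z : ℝ × ℝ, posKernel z.1 * Complex.exp ((z.1 * θ₀.1 : ℝ) * Complex.I) *
          (posKernel z.2 * Complex.exp ((z.2 * θ₀.2 : ℝ) * Complex.I)) := by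
        refine integral_congr_ae (ae_of_all _ fun z => ?_)
        simp only [planeKernel, pairing_apply, Complex.ofReal_add, Complex.ofReal_mul, add_mul,
          Complex.exp_add, mul_comm (θ₀.1 : ℂ), mul_comm (θ₀.2 : ℂ)]
        ring
    _ = (2 * Real.pi) ^ 2 * planeKernelHat (-θ₀) := by
        rw [Measure.volume_eq_prod, integral_prod_mul
          (fun x => (posKernel x : ℂ) * Complex.exp ((x * θ₀.1 : ℝ) * Complex.I))
          (fun x => (posKernel x : ℂ) * Complex.exp ((x * θ₀.2 : ℝ) * Complex.I)),
          integral_posKernel_mul_exp, integral_posKernel_mul_exp, planeKernelHat]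
        simp only [Prod.fst_neg, Prod.snd_neg]
        ring

lemma integral_planeKernel_sub_mul_exp (ν : Measure (ℝ × ℝ)) [IsFiniteMeasure ν] (θ₀ z : ℝ × ℝ) :
    ∫ p, planeKernel (z - p) * Complex.exp (pairing θ₀ (z - p) * Complex.I) ∂ν =
      ∫ θ, planeKernelHat (θ - θ₀) * Complex.exp (pairing θ z * Complex.I) * charFn ν (-θ) := by
  have hint : Integrable (fun x : (ℝ × ℝ) × (ℝ × ℝ) =>
      planeKernelHat (x.2 - θ₀) * Complex.exp (pairing x.2 (z - x.1) * Complex.I))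
      (ν.prod volume) :=
    ((integrable_planeKernelHat.comp_sub_right θ₀).comp_snd ν).mul_bdd (c := 1)
      (Continuous.aestronglyMeasurable (by fun_prop))
      (ae_of_all _ fun x => (Complex.norm_exp_ofReal_mul_I _).le)
  simp_rw [planeKernel_mul_exp]
  rw [integral_integral_swap hint]
  refine integral_congr_ae (ae_of_all _ fun θ => ?_)
  simp only [charFn_apply, ← integral_const_mul]
  refine integral_congr_ae (ae_of_all _ fun p => ?_)
  simp only [mul_assoc, ← Complex.exp_add, map_sub, map_neg, neg_apply, Complex.ofReal_sub,
    Complex.ofReal_neg]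
  ring_nf

lemma integrable_exp_neg_mul_norm_sq {c : ℝ} (hc : 0 < c) :
    Integrable fun θ : ℝ × ℝ => Real.exp (-(c * ‖θ‖ ^ 2)) := by
  have hgauss := integrable_exp_neg_mul_sq (half_pos hc)
  refine (hgauss.mul_prod hgauss).mono' (Continuous.aestronglyMeasurable (by fun_prop))
    (ae_of_all _ fun θ => ?_)
  rw [Real.norm_of_nonneg (Real.exp_pos _).le, ← Real.exp_add, Real.exp_le_exp]
  have h₁ := pow_le_pow_left₀ (norm_nonneg _) (norm_fst_le θ) 2
  have h₂ := pow_le_pow_left₀ (norm_nonneg _) (norm_snd_le θ) 2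
  rw [Real.norm_eq_abs, sq_abs] at h₁ h₂
  nlinarith

lemma natCast_mul_integral_eq_integral_smul (f : ℝ × ℝ → ℂ) (n : ℕ) :
    n * ∫ θ, f θ = ∫ τ, f ((√n)⁻¹ • τ) := by
  rw [Measure.integral_comp_smul, Module.finrank_prod, Module.finrank_self, inv_pow, inv_inv,
    Real.sq_sqrt n.cast_nonneg, Nat.abs_cast, Complex.real_smul, Complex.ofReal_natCast]

lemma integrable_planeKernel_sub (ν : Measure (ℝ × ℝ)) [IsFiniteMeasure ν] (z : ℝ × ℝ) :
    Integrable (fun p => planeKernel (z - p)) ν :=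
  Integrable.of_bound (Continuous.aestronglyMeasurable (by fun_prop)) _
    (ae_of_all _ fun _ => norm_planeKernel_le _)

lemma integral_planeKernel_sub_le (ν : Measure (ℝ × ℝ)) [IsProbabilityMeasure ν] (z : ℝ × ℝ) :
    ∫ p, planeKernel (z - p) ∂ν ≤ 115 ^ 2 := by
  simpa using integral_mono (integrable_planeKernel_sub ν z) (integrable_const _)
    fun p => planeKernel_le (z - p)

section LocalLimit

open ProbabilityTheory

variable {μ : Measure (ℝ × ℝ)}

lemma norm_rescaled_integrand_le {c : ℝ} {θ₀ : ℝ × ℝ}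
    (hc : ∀ θ, ‖θ‖ ≤ 1 + ‖θ₀‖ → ‖charFn μ θ‖ ≤ Real.exp (-(c * ‖θ‖ ^ 2))) {n : ℕ} (hn : n ≠ 0)
    (z τ : ℝ × ℝ) :
    ‖planeKernelHat ((√n)⁻¹ • τ - θ₀) * Complex.exp (pairing ((√n)⁻¹ • τ) z * Complex.I) *
      charFn μ (-((√n)⁻¹ • τ)) ^ n‖ ≤ 4 * Real.exp (-(c * ‖τ‖ ^ 2)) := by
  have hn₀ : (n : ℝ) ≠ 0 := Nat.cast_ne_zero.2 hn
  rw [norm_mul, norm_mul, Complex.norm_exp_ofReal_mul_I, mul_one, norm_pow]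
  rcases lt_or_ge 1 ‖(√n)⁻¹ • τ - θ₀‖ with hfar | hnear
  · rw [planeKernelHat_eq_zero hfar, norm_zero, zero_mul]
    positivity
  have hle : ‖-((√n)⁻¹ • τ)‖ ≤ 1 + ‖θ₀‖ := by
    rw [norm_neg]
    linarith [norm_le_norm_sub_add ((√n)⁻¹ • τ) θ₀]
  have hpow : ‖charFn μ (-((√n)⁻¹ • τ))‖ ^ n ≤ Real.exp (-(c * ‖τ‖ ^ 2)) := by
    refine (pow_le_pow_left₀ (norm_nonneg _) (hc _ hle) n).trans_eq ?_
    rw [← Real.exp_nat_mul, norm_neg, norm_smul, mul_pow, norm_inv, inv_pow, Real.norm_eq_abs,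
      sq_abs, Real.sq_sqrt n.cast_nonneg]
    congr 1
    field_simp
  exact mul_le_mul (norm_planeKernelHat_le _) hpow (by positivity) zero_le_four

variable [IsProbabilityMeasure μ]

lemma natCast_mul_integral_planeKernel_iterConv (n : ℕ) (θ₀ z : ℝ × ℝ) :
    n * ∫ p, planeKernel (z - p) * Complex.exp (pairing θ₀ (z - p) * Complex.I) ∂(iterConv μ n) =
      ∫ τ, planeKernelHat ((√n)⁻¹ • τ - θ₀) * Complex.exp (pairing ((√n)⁻¹ • τ) z * Complex.I) *
        charFn μ (-((√n)⁻¹ • τ)) ^ n := by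
  simp only [integral_planeKernel_sub_mul_exp, natCast_mul_integral_eq_integral_smul,
    charFn_iterConv]

lemma IsNonlattice.exists_succ_mul_integral_planeKernel_le (hnl : IsNonlattice μ)
    (hμ : MemLp id 2 μ) :
    ∃ C > 0, ∀ (n : ℕ) z, (n + 1) * ∫ p, planeKernel (z - p) ∂(iterConv μ n) ≤ C := by
  obtain ⟨c, hc, hbound⟩ := hnl.exists_norm_charFn_le_exp hμ (1 + ‖(0 : ℝ × ℝ)‖)
  have hgauss := (integrable_exp_neg_mul_norm_sq hc).const_mul 4
  have hconst : 0 ≤ ∫ τ : ℝ × ℝ, 4 * Real.exp (-(c * ‖τ‖ ^ 2)) :=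
    integral_nonneg fun τ => by positivity
  suffices hmain : ∀ (n : ℕ) z, n * ∫ p, planeKernel (z - p) ∂(iterConv μ n) ≤
      ∫ τ : ℝ × ℝ, 4 * Real.exp (-(c * ‖τ‖ ^ 2)) by
    refine ⟨_, add_pos_of_nonneg_of_pos hconst (pow_pos (by norm_num : (0 : ℝ) < 115) 2),
      fun n z => ?_⟩
    rw [add_mul, one_mul]
    exact add_le_add (hmain n z) (integral_planeKernel_sub_le _ z)
  intro n z
  rcases eq_or_ne n 0 with rfl | hn
  · rwa [Nat.cast_zero, zero_mul]
  have hrep := natCast_mul_integral_planeKernel_iterConv (μ := μ) n 0 z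
  simp only [map_zero, zero_apply, Complex.ofReal_zero, zero_mul, Complex.exp_zero, mul_one] at hrep
  rw [integral_complex_ofReal, ← Complex.ofReal_natCast, ← Complex.ofReal_mul] at hrep
  calc n * ∫ p, planeKernel (z - p) ∂(iterConv μ n)
      ≤ ‖((n * ∫ p, planeKernel (z - p) ∂(iterConv μ n) : ℝ) : ℂ)‖ := by
        rw [Complex.norm_real]
        exact le_abs_self _
    _ ≤ ∫ τ : ℝ × ℝ, 4 * Real.exp (-(c * ‖τ‖ ^ 2)) := by
        rw [hrep]
        exact norm_integral_le_of_norm_le hgauss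
          (ae_of_all _ fun τ => norm_rescaled_integrand_le hbound hn z τ)

lemma tendsto_planeKernelHat_mul_charFn_pow (hμ : MemLp id 2 μ) {ι : Type*} {l : Filter ι}
    {N : ι → ℕ} {z : ι → ℝ × ℝ} {w : ℝ × ℝ} (hN : Tendsto N l atTop)
    (hz : Tendsto (fun j => (√(N j))⁻¹ • (z j - (N j : ℝ) • ∫ p, p ∂μ)) l (nhds w))
    (θ₀ τ : ℝ × ℝ) :
    Tendsto (fun j => planeKernelHat ((√(N j))⁻¹ • τ - θ₀) *
        Complex.exp (pairing ((√(N j))⁻¹ • τ) (z j) * Complex.I) *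
        charFn μ (-((√(N j))⁻¹ • τ)) ^ N j) l
      (nhds (planeKernelHat (-θ₀) *
        (Complex.exp (pairing τ w * Complex.I) * Complex.exp (-Var[pairing τ; μ] / 2)))) := by
  have hsqrt : Tendsto (fun j => (√(N j))⁻¹) l (nhds 0) :=
    tendsto_inv_atTop_zero.comp
      (Real.tendsto_sqrt_atTop.comp (tendsto_natCast_atTop_atTop.comp hN))
  have hhat : Tendsto (fun j => planeKernelHat ((√(N j))⁻¹ • τ - θ₀)) l
      (nhds (planeKernelHat (-θ₀))) := by
    have harg := (hsqrt.smul_const τ).sub_const θ₀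
    rw [zero_smul, zero_sub] at harg
    exact (continuous_planeKernelHat.tendsto _).comp harg
  have hphase : Tendsto (fun j => Complex.exp
      (pairing τ ((√(N j))⁻¹ • (z j - (N j : ℝ) • ∫ p, p ∂μ)) * Complex.I)) l
      (nhds (Complex.exp (pairing τ w * Complex.I))) :=
    ((by fun_prop : Continuous fun w => Complex.exp (pairing τ w * Complex.I)).tendsto w).comp hz
  have hclt := (tendsto_centered_charFunDual_pow (pairing (-τ)) (memLp_dual hμ _)).comp hN
  have hvar : Var[pairing (-τ); μ] = Var[pairing τ; μ] := by
    rw [map_neg]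
    exact variance_neg
  rw [hvar] at hclt
  refine (hhat.mul (hphase.mul hclt)).congr fun j => ?_
  rw [Function.comp_apply, ContinuousLinearMap.integral_comp_id_comm (hμ.integrable one_le_two),
    mul_pow, ← Complex.exp_nat_mul, ← mul_assoc (Complex.exp _), ← Complex.exp_add, mul_assoc]
  simp only [charFn, map_neg, map_smul, map_sub, smul_neg, smul_apply, neg_apply, smul_eq_mul]
  congr 3
  push_cast
  ring

theorem IsNonlattice.tendsto_natCast_mul_integral_planeKernel (hnl : IsNonlattice μ)
    (hμ : MemLp id 2 μ) {ι : Type*} {l : Filter ι} [l.IsCountablyGenerated]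
    {N : ι → ℕ} {z : ι → ℝ × ℝ} {w : ℝ × ℝ} (hN : Tendsto N l atTop)
    (hz : Tendsto (fun j => (√(N j))⁻¹ • (z j - (N j : ℝ) • ∫ p, p ∂μ)) l (nhds w))
    (θ₀ : ℝ × ℝ) :
    Tendsto (fun j => N j * ∫ p, planeKernel (z j - p) *
        Complex.exp (pairing θ₀ (z j - p) * Complex.I) ∂(iterConv μ (N j))) l
      (nhds (planeKernelHat (-θ₀) * ∫ τ : ℝ × ℝ,
        Complex.exp (pairing τ w * Complex.I) * Complex.exp (-Var[pairing τ; μ] / 2))) := by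
  obtain ⟨c, hc, hbound⟩ := hnl.exists_norm_charFn_le_exp hμ (1 + ‖θ₀‖)
  have hcont := continuous_charFn μ
  simp only [natCast_mul_integral_planeKernel_iterConv]
  rw [← integral_const_mul]
  refine tendsto_integral_filter_of_dominated_convergence _
    (Eventually.of_forall fun j => Continuous.aestronglyMeasurable (by fun_prop))
    ((hN.eventually (eventually_ne_atTop 0)).mono fun j hj =>
      ae_of_all _ (norm_rescaled_integrand_le hbound hj (z j)))
    ((integrable_exp_neg_mul_norm_sq hc).const_mul 4)
    (ae_of_all _ (tendsto_planeKernelHat_mul_charFn_pow hμ hN hz θ₀))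

lemma integrable_sq_fst_sub {ν : Measure (ℝ × ℝ)} [IsFiniteMeasure ν] (hν : MemLp id 2 ν)
    (c : ℝ) : Integrable (fun p : ℝ × ℝ => (p.1 - c) ^ 2) ν :=
  (hν.fst.sub (memLp_const c)).integrable_sq

lemma integrable_mul_planeKernel_sub {ν : Measure (ℝ × ℝ)} {g : ℝ × ℝ → ℝ} (hg : Integrable g ν)
    (z : ℝ × ℝ) : Integrable (fun p => g p * planeKernel (z - p)) ν :=
  hg.mul_bdd (Continuous.aestronglyMeasurable (by fun_prop))
    (ae_of_all _ fun _ => norm_planeKernel_le _)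

lemma integral_sq_fst_sub_iterConv (hμ : MemLp id 2 μ) (n : ℕ) :
    ∫ p, (p.1 - n * ∫ q, q.1 ∂μ) ^ 2 ∂(iterConv μ n) = n * Var[Prod.fst; μ] := by
  have hvar := variance_iterConv (ContinuousLinearMap.fst ℝ ℝ ℝ) hμ n
  rw [variance_eq_integral (ContinuousLinearMap.continuous _).aemeasurable,
    integral_iterConv _ hμ] at hvar
  exact hvar

section TwoHalves

variable {ν₁ ν₂ : Measure (ℝ × ℝ)} [IsProbabilityMeasure ν₂]

lemma integrable_mul_planeKernel_sub_add {g : ℝ × ℝ → ℝ} (hg : Integrable g ν₁) (z : ℝ × ℝ) :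
    Integrable (fun x : (ℝ × ℝ) × (ℝ × ℝ) => g x.1 * planeKernel (z - (x.1 + x.2)))
      (ν₁.prod ν₂) :=
  (hg.comp_fst ν₂).mul_bdd (Continuous.aestronglyMeasurable (by fun_prop))
    (ae_of_all _ fun _ => norm_planeKernel_le _)

variable [IsProbabilityMeasure ν₁]

lemma integral_mul_planeKernel_sub_add_le {g : ℝ × ℝ → ℝ} (hg : Integrable g ν₁)
    (hg₀ : 0 ≤ g) {K : ℝ} (hK : ∀ z, ∫ p, planeKernel (z - p) ∂ν₂ ≤ K) (z : ℝ × ℝ) :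
    ∫ x : (ℝ × ℝ) × (ℝ × ℝ), g x.1 * planeKernel (z - (x.1 + x.2)) ∂(ν₁.prod ν₂) ≤
      (∫ p, g p ∂ν₁) * K := by
  have hint := integrable_mul_planeKernel_sub_add (ν₂ := ν₂) hg z
  rw [integral_prod _ hint, ← integral_mul_const]
  refine integral_mono hint.integral_prod_left (hg.mul_const K) fun x => ?_
  simp only [integral_const_mul, ← sub_sub]
  exact mul_le_mul_of_nonneg_left (hK (z - x)) (hg₀ x)

lemma integral_sq_mul_planeKernel_conv_le (h₁ : MemLp id 2 ν₁) (h₂ : MemLp id 2 ν₂) {K₁ K₂ : ℝ}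
    (hK₁ : ∀ z, ∫ p, planeKernel (z - p) ∂ν₁ ≤ K₁) (hK₂ : ∀ z, ∫ p, planeKernel (z - p) ∂ν₂ ≤ K₂)
    (c₁ c₂ : ℝ) (z : ℝ × ℝ) :
    ∫ p, (p.1 - (c₁ + c₂)) ^ 2 * planeKernel (z - p) ∂(Measure.conv ν₁ ν₂) ≤
      2 * ((∫ p, (p.1 - c₁) ^ 2 ∂ν₁) * K₂) + 2 * ((∫ p, (p.1 - c₂) ^ 2 ∂ν₂) * K₁) := by
  have hsq₁ := integrable_sq_fst_sub h₁ c₁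
  have hsq₂ := integrable_sq_fst_sub h₂ c₂
  have hint₁ := integrable_mul_planeKernel_sub_add (ν₂ := ν₂) hsq₁ z
  have hint₂ : Integrable (fun x : (ℝ × ℝ) × (ℝ × ℝ) =>
      (x.2.1 - c₂) ^ 2 * planeKernel (z - (x.2 + x.1))) (ν₁.prod ν₂) :=
    (integrable_mul_planeKernel_sub_add (ν₂ := ν₁) hsq₂ z).swap
  have hle₁ := integral_mul_planeKernel_sub_add_le hsq₁ (fun p => sq_nonneg _) hK₂ z
  have hle₂ := integral_mul_planeKernel_sub_add_le hsq₂ (fun p => sq_nonneg _) hK₁ z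
  rw [← integral_prod_swap] at hle₂
  simp only [Prod.fst_swap, Prod.snd_swap] at hle₂
  calc ∫ p, (p.1 - (c₁ + c₂)) ^ 2 * planeKernel (z - p) ∂(Measure.conv ν₁ ν₂)
      = ∫ x : (ℝ × ℝ) × (ℝ × ℝ), ((x.1 + x.2).1 - (c₁ + c₂)) ^ 2 *
          planeKernel (z - (x.1 + x.2)) ∂(ν₁.prod ν₂) := by
        rw [Measure.conv, integral_map (by fun_prop)
          (Continuous.aestronglyMeasurable (by fun_prop))]
    _ ≤ ∫ x : (ℝ × ℝ) × (ℝ × ℝ), (2 * ((x.1.1 - c₁) ^ 2 * planeKernel (z - (x.1 + x.2))) +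
          2 * ((x.2.1 - c₂) ^ 2 * planeKernel (z - (x.2 + x.1)))) ∂(ν₁.prod ν₂) := by
        refine integral_mono_of_nonneg
          (ae_of_all _ fun x => mul_nonneg (sq_nonneg _) (planeKernel_pos _).le)
          ((hint₁.const_mul 2).add (hint₂.const_mul 2)) (ae_of_all _ fun x => ?_)
        simp only [Prod.fst_add]
        rw [add_comm x.2 x.1, ← mul_assoc, ← mul_assoc, ← add_mul]
        refine mul_le_mul_of_nonneg_right ?_ (planeKernel_pos _).le
        nlinarith [sq_nonneg ((x.1.1 - c₁) - (x.2.1 - c₂))]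
    _ ≤ _ := by
        rw [integral_add (hint₁.const_mul 2) (hint₂.const_mul 2), integral_const_mul,
          integral_const_mul]
        exact add_le_add (mul_le_mul_of_nonneg_left hle₁ zero_le_two)
          (mul_le_mul_of_nonneg_left hle₂ zero_le_two)

end TwoHalves

-- Half of the steps spread the kernel over area `n`, the other half produce the deviation.
lemma IsNonlattice.exists_integral_sq_mul_planeKernel_le (hnl : IsNonlattice μ)
    (hμ : MemLp id 2 μ) :
    ∃ C ≥ 0, ∀ (n : ℕ) z, ∫ p, (p.1 - n * ∫ q, q.1 ∂μ) ^ 2 * planeKernel (z - p) ∂(iterConv μ n) ≤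
      C := by
  obtain ⟨C, hC, hbound⟩ := hnl.exists_succ_mul_integral_planeKernel_le hμ
  have hσ := variance_nonneg Prod.fst μ
  refine ⟨4 * (Var[Prod.fst; μ] * C), by positivity, fun n z => ?_⟩
  obtain ⟨a, b, rfl, hab, hba⟩ : ∃ a b : ℕ, n = a + b ∧ a ≤ b + 1 ∧ b ≤ a + 1 :=
    ⟨n / 2, n - n / 2, by lia, by lia, by lia⟩
  have hspread (k : ℕ) (w : ℝ × ℝ) :
      ∫ p, planeKernel (w - p) ∂(iterConv μ k) ≤ C / (k + 1) := by
    rw [le_div_iff₀' (by positivity)]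
    exact hbound k w
  have hratio {j k : ℕ} (hjk : j ≤ k + 1) :
      j * Var[Prod.fst; μ] * (C / (k + 1)) ≤ Var[Prod.fst; μ] * C := by
    have hquot : (j : ℝ) / (k + 1) ≤ 1 := div_le_one_of_le₀ (by exact_mod_cast hjk) (by positivity)
    calc j * Var[Prod.fst; μ] * (C / (k + 1)) = j / (k + 1) * (Var[Prod.fst; μ] * C) := by ring
      _ ≤ _ := mul_le_of_le_one_left (by positivity) hquot
  have hconv := integral_sq_mul_planeKernel_conv_le (memLp_iterConv hμ a) (memLp_iterConv hμ b)
    (hspread a) (hspread b) (a * ∫ q, q.1 ∂μ) (b * ∫ q, q.1 ∂μ) z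
  rw [← iterConv_add, ← add_mul, ← Nat.cast_add, integral_sq_fst_sub_iterConv hμ,
    integral_sq_fst_sub_iterConv hμ] at hconv
  linarith [hratio hab, hratio hba]

lemma sq_mul_integral_planeKernel_le {ν : Measure (ℝ × ℝ)} [IsProbabilityMeasure ν]
    (hν : MemLp id 2 ν) (c : ℝ) (z : ℝ × ℝ) :
    (z.1 - c) ^ 2 * ∫ p, planeKernel (z - p) ∂ν ≤
      2 * 115 ^ 2 + 2 * ∫ p, (p.1 - c) ^ 2 * planeKernel (z - p) ∂ν := by
  have hint := (integrable_mul_planeKernel_sub (integrable_sq_fst_sub hν c) z).const_mul 2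
  have hpoint (p : ℝ × ℝ) : (z.1 - c) ^ 2 * planeKernel (z - p) ≤
      2 * 115 ^ 2 + 2 * ((p.1 - c) ^ 2 * planeKernel (z - p)) := by
    have hfst := planeKernel_mul_fst_sq_le (z - p)
    rw [Prod.fst_sub] at hfst
    nlinarith [mul_nonneg (sq_nonneg ((z.1 - p.1) - (p.1 - c))) (planeKernel_pos (z - p)).le]
  rw [← integral_const_mul]
  refine (integral_mono ((integrable_planeKernel_sub ν z).const_mul _)
    ((integrable_const _).add hint) hpoint).trans_eq ?_
  rw [integral_add' (integrable_const _) hint, integral_const, probReal_univ, one_smul,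
    integral_const_mul]

lemma IsNonlattice.exists_sq_mul_integral_planeKernel_le (hnl : IsNonlattice μ)
    (hμ : MemLp id 2 μ) :
    ∃ C > 0, ∀ (n : ℕ) (z : ℝ × ℝ),
      (z.1 - n * ∫ q, q.1 ∂μ) ^ 2 * ∫ p, planeKernel (z - p) ∂(iterConv μ n) ≤ C := by
  obtain ⟨C, hC, hbound⟩ := hnl.exists_integral_sq_mul_planeKernel_le hμ
  refine ⟨2 * 115 ^ 2 + 2 * C, by positivity, fun n z => ?_⟩
  linarith [hbound n z, sq_mul_integral_planeKernel_le (memLp_iterConv hμ n) (n * ∫ q, q.1 ∂μ) z]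

end LocalLimit

/-! ### The Gaussian integral along a line -/

section Gaussian

open ProbabilityTheory

lemma integral_cexp_neg_half_mul_sq {a : ℝ} (ha : 0 < a) (b : ℂ) :
    ∫ x : ℝ, Complex.exp (-(a / 2) * x ^ 2 + b * x) =
      √(2 * Real.pi / a) * Complex.exp (b ^ 2 / (2 * a)) := by
  have ha' : (a : ℂ) ≠ 0 := by exact_mod_cast ha.ne'
  have hre : (-((a / 2 : ℝ) : ℂ)).re < 0 := by
    rw [Complex.neg_re, Complex.ofReal_re]
    linarith
  have h := integral_cexp_quadratic hre b 0
  simp only [add_zero, neg_neg, Complex.ofReal_div, Complex.ofReal_ofNat] at h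
  rw [h, Real.sqrt_eq_rpow, Complex.ofReal_cpow (by positivity)]
  push_cast
  congr 2 <;> field_simp
  ring

section QuadraticForm

variable {A B D : ℝ}

lemma mul_add_sq_le_quadratic_form (hD : 0 < D) (hΔ : 0 < A * D - B ^ 2) (x y : ℝ) :
    (A * D - B ^ 2) / (A + D) * (x ^ 2 + y ^ 2) ≤ x ^ 2 * A + 2 * x * y * B + y ^ 2 * D := by
  have hA : 0 < A := pos_of_mul_pos_left (by nlinarith [sq_nonneg B] : 0 < A * D) hD.le
  rw [div_mul_eq_mul_div, div_le_iff₀ (by positivity)]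
  linear_combination sq_nonneg (A * x + B * y) + sq_nonneg (B * x + D * y)

lemma integrable_cexp_neg_half_quadratic_form (hD : 0 < D) (hΔ : 0 < A * D - B ^ 2) (w : ℝ × ℝ) :
    Integrable fun τ : ℝ × ℝ => Complex.exp (pairing τ w * Complex.I) *
      Complex.exp (-((τ.1 ^ 2 * A + 2 * τ.1 * τ.2 * B + τ.2 ^ 2 * D : ℝ) : ℂ) / 2) := by
  have hA : 0 < A := pos_of_mul_pos_left (by nlinarith [sq_nonneg B] : 0 < A * D) hD.le
  have hc : 0 < (A * D - B ^ 2) / (A + D) := by positivity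
  refine (integrable_exp_neg_mul_norm_sq (half_pos hc)).mono'
    (Continuous.aestronglyMeasurable (by simp only [pairing_apply]; fun_prop))
    (ae_of_all _ fun τ => ?_)
  have hnorm : ‖τ‖ ^ 2 ≤ τ.1 ^ 2 + τ.2 ^ 2 := by
    rw [Prod.norm_def, Real.norm_eq_abs, Real.norm_eq_abs]
    rcases max_choice |τ.1| |τ.2| with h | h <;> rw [h, sq_abs]
    · linarith [sq_nonneg τ.2]
    · linarith [sq_nonneg τ.1]
  rw [norm_mul, Complex.norm_exp_ofReal_mul_I, one_mul, ← Complex.ofReal_ofNat,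
    ← Complex.ofReal_neg, ← Complex.ofReal_div, Complex.norm_exp_ofReal]
  refine Real.exp_le_exp.2 ?_
  linarith [mul_add_sq_le_quadratic_form hD hΔ τ.1 τ.2, mul_le_mul_of_nonneg_left hnorm hc.le]

lemma integral_snd_cexp_neg_half_quadratic_form (hD : 0 < D) (w : ℝ × ℝ) (x : ℝ) :
    ∫ y : ℝ, Complex.exp (pairing (x, y) w * Complex.I) *
        Complex.exp (-((x ^ 2 * A + 2 * x * y * B + y ^ 2 * D : ℝ) : ℂ) / 2) =
      √(2 * Real.pi / D) * Complex.exp (-(w.2 ^ 2 / (2 * D))) *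
        Complex.exp (-(((A * D - B ^ 2) / D : ℝ) / 2) * x ^ 2 +
          (w.1 - w.2 * B / D) * Complex.I * x) := by
  have hD' : (D : ℂ) ≠ 0 := by exact_mod_cast hD.ne'
  calc _ = ∫ y : ℝ, Complex.exp (-(A * x ^ 2 / 2) + w.1 * x * Complex.I) *
        Complex.exp (-(D / 2) * y ^ 2 + (w.2 * Complex.I - B * x) * y) := by
        congr 1 with y
        rw [← Complex.exp_add, ← Complex.exp_add, pairing_apply]
        push_cast
        ring_nf
    _ = _ := by
        rw [integral_const_mul, integral_cexp_neg_half_mul_sq hD, mul_left_comm,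
          mul_assoc (√_ : ℂ), ← Complex.exp_add, ← Complex.exp_add]
        congr 2
        push_cast
        field_simp
        linear_combination (w.2 : ℂ) ^ 2 * Complex.I_sq

lemma integral_cexp_neg_half_quadratic_form (hD : 0 < D) (hΔ : 0 < A * D - B ^ 2) (w : ℝ × ℝ) :
    ∫ τ : ℝ × ℝ, Complex.exp (pairing τ w * Complex.I) *
        Complex.exp (-((τ.1 ^ 2 * A + 2 * τ.1 * τ.2 * B + τ.2 ^ 2 * D : ℝ) : ℂ) / 2) =
      ((2 * Real.pi / √(A * D - B ^ 2) *
        Real.exp (-(w.1 ^ 2 * D - 2 * w.1 * w.2 * B + w.2 ^ 2 * A) /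
          (2 * (A * D - B ^ 2))) : ℝ) : ℂ) := by
  have hD' : (D : ℂ) ≠ 0 := by exact_mod_cast hD.ne'
  have hΔ' : (D * A - B ^ 2 : ℂ) ≠ 0 := by exact_mod_cast mul_comm A D ▸ hΔ.ne'
  have hsqrt : √(2 * Real.pi / D) * √(2 * Real.pi / ((A * D - B ^ 2) / D)) =
      2 * Real.pi / √(A * D - B ^ 2) := by
    rw [← Real.sqrt_mul (by positivity), div_div_eq_mul_div, div_mul_div_comm, ← mul_assoc,
      mul_comm D, mul_div_mul_right _ _ hD.ne', Real.sqrt_div (by positivity),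
      Real.sqrt_mul_self (by positivity)]
  rw [Measure.volume_eq_prod, integral_prod _ (integrable_cexp_neg_half_quadratic_form hD hΔ w)]
  simp only [integral_snd_cexp_neg_half_quadratic_form hD]
  rw [integral_const_mul, integral_cexp_neg_half_mul_sq (by positivity), ← hsqrt, mul_mul_mul_comm,
    ← Complex.exp_add]
  push_cast
  congr 2
  field_simp
  linear_combination (w.1 * D - w.2 * B : ℂ) ^ 2 * Complex.I_sq

lemma integral_gaussian_eq_sq_div_sqrt {Δ W : ℝ} (hΔ : 0 < Δ) (hW : 0 < W) :
    ∫ t : ℝ, 2 * Real.pi / √Δ * Real.exp (-(W / (2 * Δ)) * t ^ 2) =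
      (2 * Real.pi) ^ 2 / √(2 * Real.pi * W) := by
  rw [integral_const_mul, integral_gaussian, div_mul_eq_mul_div,
    div_eq_div_iff (by positivity) (by positivity), mul_assoc,
    ← Real.sqrt_mul (by positivity), sq, mul_assoc (2 * Real.pi)]
  congr 1
  rw [← Real.sqrt_sq (by positivity : (0 : ℝ) ≤ 2 * Real.pi * √Δ), mul_pow, Real.sq_sqrt hΔ.le]
  congr 1
  field_simp

end QuadraticForm

variable {μ : Measure (ℝ × ℝ)} [IsProbabilityMeasure μ]

lemma variance_pairing (hμ : MemLp id 2 μ) (τ : ℝ × ℝ) :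
    Var[pairing τ; μ] = τ.1 ^ 2 * Var[Prod.fst; μ] +
      2 * τ.1 * τ.2 * cov[Prod.fst, Prod.snd; μ] + τ.2 ^ 2 * Var[Prod.snd; μ] := by
  have hadd := variance_fun_add (hμ.fst.const_mul τ.1) (hμ.snd.const_mul τ.2)
  rw [variance_const_mul, variance_const_mul, covariance_const_mul_left,
    covariance_const_mul_right] at hadd
  calc Var[pairing τ; μ] = Var[fun p => τ.1 * p.1 + τ.2 * p.2; μ] := rfl
    _ = _ := hadd
    _ = _ := by simp only [id_eq]; ring

lemma IsNonlattice.variance_pairing_pos (hnl : IsNonlattice μ) (hμ : MemLp id 2 μ) {τ : ℝ × ℝ}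
    (hτ : τ ≠ 0) : 0 < Var[pairing τ; μ] := by
  refine (variance_nonneg _ _).lt_of_ne fun hzero => (hnl τ hτ).ne ?_
  have hconst := ae_eq_integral_of_variance_eq_zero (memLp_dual hμ (pairing τ)) hzero.symm
  rw [charFn_apply, integral_congr_ae (g := fun _ => Complex.exp
    ((∫ p, pairing τ p ∂μ : ℝ) * Complex.I)) (hconst.mono fun p hp => by simp only [hp])]
  rw [integral_const, probReal_univ, one_smul, Complex.norm_exp_ofReal_mul_I]

lemma IsNonlattice.integral_gaussian_line (hnl : IsNonlattice μ) (hμ : MemLp id 2 μ) {m : ℝ × ℝ}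
    (hm : m ≠ 0) :
    ∫ t : ℝ, ∫ τ : ℝ × ℝ, Complex.exp (pairing τ (-t • m) * Complex.I) *
        Complex.exp (-Var[pairing τ; μ] / 2) =
      (((2 * Real.pi) ^ 2 / √(2 * Real.pi * Var[pairing (-m.2, m.1); μ]) : ℝ) : ℂ) := by
  have hD : 0 < Var[Prod.snd; μ] := by
    simpa [variance_pairing hμ] using hnl.variance_pairing_pos hμ (τ := (0, 1)) (by simp)
  have hW : 0 < Var[pairing (-m.2, m.1); μ] :=
    hnl.variance_pairing_pos hμ fun h => hm (Prod.ext (by simpa using congrArg Prod.snd h)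
      (by simpa using congrArg Prod.fst h))
  have hΔ : 0 < Var[Prod.fst; μ] * Var[Prod.snd; μ] - cov[Prod.fst, Prod.snd; μ] ^ 2 := by
    have hpos := hnl.variance_pairing_pos hμ
      (τ := (Var[Prod.snd; μ], -cov[Prod.fst, Prod.snd; μ])) (by simp [hD.ne'])
    rw [variance_pairing hμ] at hpos
    exact pos_of_mul_pos_right (by linear_combination hpos :
      0 < Var[Prod.snd; μ] * (Var[Prod.fst; μ] * Var[Prod.snd; μ] -
        cov[Prod.fst, Prod.snd; μ] ^ 2)) hD.le
  rw [← integral_gaussian_eq_sq_div_sqrt hΔ hW, ← integral_complex_ofReal]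
  congr 1 with t
  simp only [variance_pairing hμ]
  rw [integral_cexp_neg_half_quadratic_form hD hΔ]
  congr 3
  simp only [Prod.smul_fst, Prod.smul_snd, smul_eq_mul]
  ring

end Gaussian

/-! ### Summing a local limit theorem over time -/

section SumOverTime

lemma map_natFloor_restrict_Ici :
    Measure.map (fun s : ℝ => ⌊s⌋₊) (volume.restrict (Ici 0)) = Measure.count := by
  refine Measure.ext_of_singleton fun n => ?_
  have hpre : (fun s : ℝ => ⌊s⌋₊) ⁻¹' {n} ∩ Ici 0 = Ico (n : ℝ) (n + 1) := by
    ext s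
    simp only [mem_inter_iff, mem_preimage, mem_singleton_iff, mem_Ici, mem_Ico]
    refine ⟨fun ⟨hfloor, hs⟩ => (Nat.floor_eq_iff hs).1 hfloor, fun hs => ?_⟩
    have hs₀ : 0 ≤ s := n.cast_nonneg.trans hs.1
    exact ⟨(Nat.floor_eq_iff hs₀).2 hs, hs₀⟩
  rw [Measure.map_apply Nat.measurable_floor (measurableSet_singleton n), Measure.restrict_apply
    (Nat.measurable_floor (measurableSet_singleton n)), Measure.count_singleton, hpre,
    Real.volume_Ico, add_sub_cancel_left, ENNReal.ofReal_one]

/-- The step function on `[0, ∞)` with value `a n` on `[n, n + 1)`, extended by zero; it turns a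
sum over `n` into an integral. -/
noncomputable def stepFun (a : ℕ → ℂ) : ℝ → ℂ := (Ici 0).indicator fun s => a ⌊s⌋₊

lemma stepFun_of_nonneg (a : ℕ → ℂ) {s : ℝ} (hs : 0 ≤ s) : stepFun a s = a ⌊s⌋₊ :=
  indicator_of_mem (mem_Ici.2 hs) _

lemma stepFun_of_neg (a : ℕ → ℂ) {s : ℝ} (hs : s < 0) : stepFun a s = 0 :=
  indicator_of_notMem (by simpa using hs) _

@[fun_prop]
lemma measurable_stepFun (a : ℕ → ℂ) : Measurable (stepFun a) :=
  ((measurable_from_nat (f := a)).comp Nat.measurable_floor).indicator measurableSet_Ici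

lemma integral_stepFun {a : ℕ → ℂ} (ha : Summable fun n => ‖a n‖) :
    ∫ s, stepFun a s = ∑' n, a n := by
  have hint : Integrable a Measure.count := integrable_count_iff.2 ha
  have hcount : ∫ s in Ici (0 : ℝ), a ⌊s⌋₊ = ∫ n, a n ∂Measure.count := by
    rw [← map_natFloor_restrict_Ici,
      integral_map Nat.measurable_floor.aemeasurable (by fun_prop)]
  rw [stepFun, integral_indicator measurableSet_Ici, hcount, integral_countable hint]
  simp only [Measure.real, Measure.count_singleton, ENNReal.toReal_one, one_smul]

lemma sqrt_mul_integral_eq {X : ℝ} (hX : 0 < X) (g : ℝ → ℂ) :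
    (√X : ℂ) * ∫ s, g s = ∫ t, (X : ℂ) * g (X + √X * t) := by
  have hscale : ∫ t, g (X + √X * t) = ((√X)⁻¹ : ℝ) • ∫ s, g (X + s) := by
    rw [Measure.integral_comp_mul_left (fun s => g (X + s)), abs_of_pos (by positivity)]
  rw [integral_const_mul, hscale, integral_add_left_eq_self, Complex.real_smul, ← mul_assoc,
    ← Complex.ofReal_mul, ← div_eq_mul_inv, Real.div_sqrt]

section Bounds

variable {X u C₁ C₂ : ℝ} {n : ℕ}

lemma succ_sq_mul_le (hu : 0 ≤ u) (h₁ : (n + 1) * u ≤ C₁) (h₂ : (X - n) ^ 2 * u ≤ C₂) :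
    (n + 1) ^ 2 * u ≤ 2 * C₂ + 2 * (X + 1) ^ 2 * C₁ := by
  have hu₁ : u ≤ C₁ := by nlinarith [mul_nonneg n.cast_nonneg hu]
  nlinarith [mul_nonneg (sq_nonneg ((X - n) - -(X + 1))) hu,
    mul_le_mul_of_nonneg_left hu₁ (sq_nonneg (X + 1))]

lemma mul_le_mul_inv_one_add_sq {t : ℝ} (hX : 4 ≤ X) (hu : 0 ≤ u) (ht : 0 ≤ X + √X * t)
    (h₁ : (⌊X + √X * t⌋₊ + 1) * u ≤ C₁) (h₂ : (X - ⌊X + √X * t⌋₊) ^ 2 * u ≤ C₂) :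
    X * u ≤ (4 * C₁ + 4 * C₂) * (1 + t ^ 2)⁻¹ := by
  have hfloor := Nat.floor_le ht
  have hlt := Nat.lt_floor_add_one (X + √X * t)
  have hsq : √X ^ 2 = X := Real.sq_sqrt (by linarith)
  have hsqrt : 2 ≤ √X := Real.le_sqrt_of_sq_le (by linarith)
  set n : ℝ := (⌊X + √X * t⌋₊ : ℝ)
  have hn : 0 ≤ n := Nat.cast_nonneg _
  have hu₁ : u ≤ C₁ := by nlinarith [mul_nonneg hn hu]
  have hC₂ : 0 ≤ C₂ := (mul_nonneg (sq_nonneg _) hu).trans h₂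
  have hfar : X * u * t ^ 2 ≤ 2 * C₁ + 2 * C₂ := by
    have hdev : (√X * t) ^ 2 ≤ 2 * (X - n) ^ 2 + 2 := by
      nlinarith [sq_nonneg (√X * t - 2 * (n - X))]
    nlinarith [mul_le_mul_of_nonneg_right hdev hu]
  have hnear : X * u ≤ 2 * C₁ + 2 * C₂ := by
    rcases le_total (-(√X / 2)) t with h | h
    · have hhalf : X / 2 ≤ n + 1 := by nlinarith
      nlinarith [mul_le_mul_of_nonneg_right hhalf hu]
    · have ht₁ : 1 ≤ t ^ 2 := by nlinarith
      exact (le_mul_of_one_le_right (by positivity) ht₁).trans hfar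
  rw [← div_eq_mul_inv, le_div_iff₀ (by positivity)]
  linarith

end Bounds

lemma summable_norm_of_bounds {E : Type*} [NormedAddCommGroup E] {a : ℕ → E} {X C₁ C₂ : ℝ}
    (h₁ : ∀ n : ℕ, (n + 1) * ‖a n‖ ≤ C₁) (h₂ : ∀ n : ℕ, (X - n) ^ 2 * ‖a n‖ ≤ C₂) :
    Summable fun n => ‖a n‖ := by
  have hsum : Summable fun n : ℕ => (2 * C₂ + 2 * (X + 1) ^ 2 * C₁) * (((n + 1 : ℕ) : ℝ) ^ 2)⁻¹ :=
    ((summable_nat_add_iff 1).2 (Real.summable_nat_pow_inv.2 one_lt_two)).mul_left _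
  refine hsum.of_nonneg_of_le (fun n => norm_nonneg _) fun n => ?_
  rw [← div_eq_mul_inv, le_div_iff₀' (by positivity), Nat.cast_succ]
  exact succ_sq_mul_le (norm_nonneg _) (h₁ n) (h₂ n)

variable {ι : Type*} {l : Filter ι} {X : ι → ℝ}

lemma tendsto_div_of_tendsto_sub_div_sqrt (hX : Tendsto X l atTop) {Y : ι → ℝ} {t : ℝ}
    (hY : Tendsto (fun k => (Y k - X k) / √(X k)) l (nhds t)) :
    Tendsto (fun k => Y k / X k) l (nhds 1) := by
  have hinv : Tendsto (fun k => (√(X k))⁻¹) l (nhds 0) :=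
    tendsto_inv_atTop_zero.comp (Real.tendsto_sqrt_atTop.comp hX)
  have hlim := (hY.mul hinv).const_add 1
  rw [mul_zero, add_zero] at hlim
  refine hlim.congr' ((hX.eventually_gt_atTop 0).mono fun k hk => ?_)
  rw [← div_eq_mul_inv, div_div, Real.mul_self_sqrt hk.le, sub_div, div_self hk.ne']
  ring

lemma tendsto_add_sqrt_mul (hX : Tendsto X l atTop) (t : ℝ) :
    Tendsto (fun k => X k + √(X k) * t) l atTop := by
  have hsqrt : Tendsto (fun k => √(X k)) l atTop := Real.tendsto_sqrt_atTop.comp hX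
  have hprod := hsqrt.atTop_mul_atTop₀ (tendsto_atTop_add_const_right _ t hsqrt)
  refine hprod.congr' ((hX.eventually_ge_atTop 0).mono fun k hk => ?_)
  rw [mul_add, Real.mul_self_sqrt hk]

lemma tendsto_natFloor_sub_div_sqrt (hX : Tendsto X l atTop) (t : ℝ) :
    Tendsto (fun k => ((⌊X k + √(X k) * t⌋₊ : ℝ) - X k) / √(X k)) l (nhds t) := by
  have hinv : Tendsto (fun k => t - (√(X k))⁻¹) l (nhds t) := by
    simpa using (tendsto_inv_atTop_zero.comp (Real.tendsto_sqrt_atTop.comp hX)).const_sub t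
  have hpos := (tendsto_add_sqrt_mul hX t).eventually_ge_atTop 0
  refine tendsto_of_tendsto_of_tendsto_of_le_of_le' hinv tendsto_const_nhds ?_ ?_ <;>
    filter_upwards [hX.eventually_gt_atTop 0, hpos] with k hk hs
  · have hlt := Nat.lt_floor_add_one (X k + √(X k) * t)
    rw [le_div_iff₀ (Real.sqrt_pos.2 hk), sub_mul, inv_mul_cancel₀ (Real.sqrt_pos.2 hk).ne']
    linarith
  · rw [div_le_iff₀ (Real.sqrt_pos.2 hk)]
    linarith [Nat.floor_le hs]

lemma norm_mul_stepFun_le {a : ℕ → ℂ} {X C₁ C₂ : ℝ} (h₁ : ∀ n : ℕ, (n + 1) * ‖a n‖ ≤ C₁)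
    (h₂ : ∀ n : ℕ, (X - n) ^ 2 * ‖a n‖ ≤ C₂) (hX : 4 ≤ X) (t : ℝ) :
    ‖(X : ℂ) * stepFun a (X + √X * t)‖ ≤ (4 * C₁ + 4 * C₂) * (1 + t ^ 2)⁻¹ := by
  rw [norm_mul, Complex.norm_real, Real.norm_of_nonneg (by linarith)]
  rcases le_or_gt 0 (X + √X * t) with hs | hs
  · rw [stepFun_of_nonneg a hs]
    exact mul_le_mul_inv_one_add_sq hX (norm_nonneg _) hs (h₁ _) (h₂ _)
  · have hC₁ : 0 ≤ C₁ := (by positivity : (0 : ℝ) ≤ _).trans (h₁ 0)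
    have hC₂ : 0 ≤ C₂ := (by positivity : (0 : ℝ) ≤ _).trans (h₂ 0)
    rw [stepFun_of_neg a hs, norm_zero, mul_zero]
    positivity

lemma tendsto_mul_stepFun {a : ι → ℕ → ℂ} {t : ℝ} {J : ℂ} (hX : Tendsto X l atTop)
    (hJ : ∀ N : ι → ℕ, Tendsto N l atTop →
      Tendsto (fun k => ((N k : ℝ) - X k) / √(X k)) l (nhds t) →
      Tendsto (fun k => (N k : ℂ) * a k (N k)) l (nhds J)) :
    Tendsto (fun k => (X k : ℂ) * stepFun (a k) (X k + √(X k) * t)) l (nhds J) := by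
  have hs := tendsto_add_sqrt_mul hX t
  have hN : Tendsto (fun k => ⌊X k + √(X k) * t⌋₊) l atTop := tendsto_nat_floor_atTop.comp hs
  have hNX := tendsto_natFloor_sub_div_sqrt hX t
  have hratio := (Complex.continuous_ofReal.tendsto _).comp
    ((tendsto_div_of_tendsto_sub_div_sqrt hX hNX).inv₀ one_ne_zero)
  have hlim := hratio.mul (hJ _ hN hNX)
  rw [inv_one, Complex.ofReal_one, one_mul] at hlim
  refine hlim.congr' ?_
  filter_upwards [hs.eventually_ge_atTop 0, hN.eventually_ne_atTop 0] with k hk hNk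
  rw [stepFun_of_nonneg _ hk, Function.comp_apply, inv_div, Complex.ofReal_div,
    Complex.ofReal_natCast, ← mul_assoc, div_mul_cancel₀ _ (by exact_mod_cast hNk)]

-- With `n = X + √X t`, the sum over `n` becomes a Riemann sum in `t` of mesh `1 / √X`.
theorem tendsto_sqrt_mul_tsum [l.IsCountablyGenerated] {a : ι → ℕ → ℂ} {J : ℝ → ℂ} {C₁ C₂ : ℝ}
    (hX : Tendsto X l atTop) (h₁ : ∀ k (n : ℕ), (n + 1) * ‖a k n‖ ≤ C₁)
    (h₂ : ∀ k (n : ℕ), (X k - n) ^ 2 * ‖a k n‖ ≤ C₂)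
    (hJ : ∀ (t : ℝ) (N : ι → ℕ), Tendsto N l atTop →
      Tendsto (fun k => ((N k : ℝ) - X k) / √(X k)) l (nhds t) →
      Tendsto (fun k => (N k : ℂ) * a k (N k)) l (nhds (J t))) :
    Tendsto (fun k => (√(X k) : ℂ) * ∑' n, a k n) l (nhds (∫ t, J t)) := by
  have hlarge := hX.eventually_ge_atTop 4
  have hsum (k : ι) (hk : 4 ≤ X k) : ∫ t, (X k : ℂ) * stepFun (a k) (X k + √(X k) * t) =
      (√(X k) : ℂ) * ∑' n, a k n := by
    rw [← integral_stepFun (summable_norm_of_bounds (h₁ k) (h₂ k)),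
      sqrt_mul_integral_eq (by linarith)]
  refine (tendsto_integral_filter_of_dominated_convergence _
    (Eventually.of_forall fun k => Measurable.aestronglyMeasurable (by fun_prop))
    (hlarge.mono fun k hk => ae_of_all _ (norm_mul_stepFun_le (h₁ k) (h₂ k) hk))
    (integrable_inv_one_add_sq.const_mul _) (ae_of_all _ fun t => ?_)).congr' (hlarge.mono hsum)
  exact tendsto_mul_stepFun hX (hJ t)

end SumOverTime

/-! ### The renewal measure seen through the kernel -/

/-- Convergence of `z` to infinity along the ray spanned by `m`, with an error that is
`o(√z.1)`; the error is measured vertically. -/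
def TendsToAlong {ι : Type*} (z : ι → ℝ × ℝ) (l : Filter ι) (m : ℝ × ℝ) : Prop :=
  Tendsto (fun k => (z k).1) l atTop ∧
    Tendsto (fun k => ((z k).2 - (z k).1 * (m.2 / m.1)) / √(z k).1) l (nhds 0)

section AlongRay

variable {ι : Type*} {l : Filter ι} {z : ι → ℝ × ℝ} {m : ℝ × ℝ}

lemma tendsto_inv_sqrt_smul_sub {X : ι → ℝ} {N : ι → ℕ} {t : ℝ} (hX : Tendsto X l atTop)
    (hz : Tendsto (fun k => (√(X k))⁻¹ • (z k - X k • m)) l (nhds 0))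
    (hN : Tendsto (fun k => ((N k : ℝ) - X k) / √(X k)) l (nhds t)) :
    Tendsto (fun k => (√(N k))⁻¹ • (z k - (N k : ℝ) • m)) l (nhds (-t • m)) := by
  have hratio : Tendsto (fun k => √(X k / N k)) l (nhds 1) := by
    simpa using ((tendsto_div_of_tendsto_sub_div_sqrt hX hN).inv₀ one_ne_zero).sqrt
  have hlim := hratio.smul (hz.sub (hN.smul_const m))
  rw [one_smul, zero_sub, ← neg_smul] at hlim
  refine hlim.congr' ((hX.eventually_gt_atTop 0).mono fun k hk => ?_)
  have hsqrt : √(X k) ≠ 0 := (Real.sqrt_pos.2 hk).ne'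
  rw [Real.sqrt_div hk.le, div_eq_inv_mul (_ - _), mul_smul, ← smul_sub, ← mul_smul,
    div_mul_eq_mul_div, mul_inv_cancel₀ hsqrt, one_div]
  congr 1
  module

lemma TendsToAlong.tendsto_inv_sqrt_smul (hz : TendsToAlong z l m) (hm : 0 < m.1) :
    Tendsto (fun k => (√((z k).1 / m.1))⁻¹ • (z k - ((z k).1 / m.1) • m)) l (nhds 0) := by
  have hsnd := hz.2.mul_const √m.1
  rw [zero_mul] at hsnd
  refine ((tendsto_const_nhds (x := (0 : ℝ))).prodMk_nhds hsnd).congr' ?_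
  filter_upwards [hz.1.eventually_gt_atTop 0] with k hk
  have := Real.sqrt_pos.2 hk
  have := Real.sqrt_pos.2 hm
  rw [Real.sqrt_div hk.le]
  ext
  · simp [hm.ne']
  · simp only [Prod.smul_snd, Prod.snd_sub, smul_eq_mul]
    field_simp

end AlongRay

section KernelRenewal

open ProbabilityTheory

variable {μ : Measure (ℝ × ℝ)} [IsProbabilityMeasure μ]

lemma norm_integral_planeKernel_mul_exp_le (ν : Measure (ℝ × ℝ)) [IsFiniteMeasure ν]
    (θ₀ z : ℝ × ℝ) :
    ‖∫ p, planeKernel (z - p) * Complex.exp (pairing θ₀ (z - p) * Complex.I) ∂ν‖ ≤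
      ∫ p, planeKernel (z - p) ∂ν := by
  refine norm_integral_le_of_norm_le (integrable_planeKernel_sub ν z) (ae_of_all _ fun p => ?_)
  rw [norm_mul, Complex.norm_exp_ofReal_mul_I, mul_one, Complex.norm_real,
    Real.norm_of_nonneg (planeKernel_pos _).le]

lemma IsNonlattice.exists_div_sub_sq_mul_integral_planeKernel_le (hnl : IsNonlattice μ)
    (hμ : MemLp id 2 μ) (hm : 0 < ∫ p, p.1 ∂μ) :
    ∃ C, ∀ (n : ℕ) (z : ℝ × ℝ),
      (z.1 / ∫ p, p.1 ∂μ - n) ^ 2 * ∫ p, planeKernel (z - p) ∂(iterConv μ n) ≤ C := by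
  obtain ⟨C, -, hC⟩ := hnl.exists_sq_mul_integral_planeKernel_le hμ
  refine ⟨C / (∫ p, p.1 ∂μ) ^ 2, fun n z => ?_⟩
  rw [div_sub' hm.ne', div_pow, div_mul_eq_mul_div, mul_comm _ (n : ℝ)]
  exact div_le_div_of_nonneg_right (hC n z) (sq_nonneg _)

lemma IsNonlattice.summable_integral_planeKernel (hnl : IsNonlattice μ) (hμ : MemLp id 2 μ)
    (hm : 0 < ∫ p, p.1 ∂μ) (z : ℝ × ℝ) :
    Summable fun n => ∫ p, planeKernel (z - p) ∂(iterConv μ n) := by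
  obtain ⟨C₁, -, h₁⟩ := hnl.exists_succ_mul_integral_planeKernel_le hμ
  obtain ⟨C₂, h₂⟩ := hnl.exists_div_sub_sq_mul_integral_planeKernel_le hμ hm
  have hnorm (n : ℕ) : ‖((∫ p, planeKernel (z - p) ∂(iterConv μ n) : ℝ) : ℂ)‖ =
      ∫ p, planeKernel (z - p) ∂(iterConv μ n) := by
    rw [Complex.norm_real,
      Real.norm_of_nonneg (integral_nonneg fun p => (planeKernel_pos _).le)]
  have hsum := summable_norm_of_bounds
    (a := fun n => ((∫ p, planeKernel (z - p) ∂(iterConv μ n) : ℝ) : ℂ))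
    (fun n => (hnorm n).symm ▸ h₁ n z) (fun n => (hnorm n).symm ▸ h₂ n z)
  exact hsum.congr hnorm

theorem IsNonlattice.tendsto_sqrt_mul_tsum_integral_planeKernel (hnl : IsNonlattice μ)
    (hμ : MemLp id 2 μ) {m : ℝ × ℝ} (hm : ∫ p, p ∂μ = m) (hm₀ : 0 < m.1) {ι : Type*}
    {l : Filter ι} [l.IsCountablyGenerated] {z : ι → ℝ × ℝ} (hz : TendsToAlong z l m)
    (θ₀ : ℝ × ℝ) :
    Tendsto (fun k => (√(z k).1 : ℂ) * ∑' n, ∫ p, planeKernel (z k - p) *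
        Complex.exp (pairing θ₀ (z k - p) * Complex.I) ∂(iterConv μ n)) l
      (nhds (planeKernelHat (-θ₀) * (√m.1 * ((2 * Real.pi) ^ 2 /
        √(2 * Real.pi * Var[pairing (-m.2, m.1); μ])) : ℝ))) := by
  have hfst : ∫ p, p.1 ∂μ = m.1 := hm ▸ (fst_integral (hμ.integrable one_le_two)).symm
  have hm₁ : ∫ p, p ∂μ ≠ 0 := by
    rw [hm]
    rintro rfl
    exact hm₀.false
  obtain ⟨C₁, -, h₁⟩ := hnl.exists_succ_mul_integral_planeKernel_le hμ
  obtain ⟨C₂, h₂⟩ := hnl.exists_div_sub_sq_mul_integral_planeKernel_le hμ (hfst ▸ hm₀)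
  have hX : Tendsto (fun k => (z k).1 / m.1) l atTop := hz.1.atTop_div_const hm₀
  have hnorm (k : ι) (n : ℕ) := norm_integral_planeKernel_mul_exp_le (iterConv μ n) θ₀ (z k)
  have hlim := (tendsto_sqrt_mul_tsum hX
    (fun k n => (mul_le_mul_of_nonneg_left (hnorm k n) (by positivity)).trans (h₁ n (z k)))
    (fun k n => (mul_le_mul_of_nonneg_left (hnorm k n) (sq_nonneg _)).trans
      (hfst ▸ h₂ n (z k)))
    (fun t N hN hNX => hnl.tendsto_natCast_mul_integral_planeKernel hμ hN (hm ▸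
      tendsto_inv_sqrt_smul_sub hX (hz.tendsto_inv_sqrt_smul hm₀) hNX) θ₀)).const_mul (√m.1 : ℂ)
  rw [integral_const_mul, hnl.integral_gaussian_line hμ hm₁, hm] at hlim
  convert hlim using 2 with k
  · rw [← mul_assoc, ← Complex.ofReal_mul, ← Real.sqrt_mul hm₀.le, mul_div_cancel₀ _ hm₀.ne']
  · push_cast
    ring

end KernelRenewal

/-! ### Weak convergence of finite measures -/

section WeakConvergence

variable {ι : Type*} {l : Filter ι}

lemma charFn_eq_charFun_map_toLp (μ : Measure (ℝ × ℝ)) (t : WithLp 2 (ℝ × ℝ)) :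
    charFn μ t.ofLp = charFun (μ.map (WithLp.toLp 2)) t := by
  have hcont : Continuous (WithLp.toLp 2 : ℝ × ℝ → WithLp 2 (ℝ × ℝ)) :=
    WithLp.prod_continuous_toLp 2 ℝ ℝ
  rw [charFn_apply, charFun_apply,
    integral_map hcont.aemeasurable (Continuous.aestronglyMeasurable (by fun_prop))]
  simp only [pairing_apply, WithLp.prod_inner_apply, RCLike.inner_apply, conj_trivial,
    Complex.ofReal_add, Complex.ofReal_mul]

lemma tendsto_probabilityMeasure_of_tendsto_charFn [l.IsCountablyGenerated]
    {μs : ι → ProbabilityMeasure (ℝ × ℝ)} {μ : ProbabilityMeasure (ℝ × ℝ)}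
    (h : ∀ θ, Tendsto (fun k => charFn (μs k) θ) l (nhds (charFn μ θ))) :
    Tendsto μs l (nhds μ) := by
  have hto : Continuous (WithLp.toLp 2 : ℝ × ℝ → WithLp 2 (ℝ × ℝ)) :=
    WithLp.prod_continuous_toLp 2 ℝ ℝ
  have hof : Continuous (WithLp.ofLp : WithLp 2 (ℝ × ℝ) → ℝ × ℝ) :=
    WithLp.prod_continuous_ofLp 2 ℝ ℝ
  have hinv (ν : ProbabilityMeasure (ℝ × ℝ)) :
      (ν.map hto.aemeasurable).map hof.aemeasurable = ν := by
    refine Subtype.ext ((Measure.map_map hof.measurable hto.measurable).trans ?_)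
    exact Measure.map_id
  refine tendsto_of_seq_tendsto fun u hu => ?_
  have hlim : Tendsto (fun k => (μs (u k)).map hto.aemeasurable) atTop
      (nhds (μ.map hto.aemeasurable)) := by
    refine ProbabilityMeasure.tendsto_of_tendsto_charFun fun t => ?_
    simp only [ProbabilityMeasure.toMeasure_map, ← charFn_eq_charFun_map_toLp]
    exact (h t.ofLp).comp hu
  simpa only [hinv, Function.comp_def] using
    ProbabilityMeasure.tendsto_map_of_tendsto_of_continuous _ _ hlim hof

lemma charFn_normalize {ν : FiniteMeasure (ℝ × ℝ)} (hν : ν ≠ 0) (θ : ℝ × ℝ) :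
    charFn ν.normalize θ = (ν.mass : ℂ)⁻¹ * charFn ν θ := by
  rw [charFn_apply, charFn_apply, FiniteMeasure.toMeasure_normalize_eq_of_nonzero _ hν,
    integral_smul_nnreal_measure, NNReal.smul_def, Complex.real_smul, NNReal.coe_inv,
    Complex.ofReal_inv]

theorem tendsto_finiteMeasure_of_tendsto_charFn [l.IsCountablyGenerated]
    {μs : ι → FiniteMeasure (ℝ × ℝ)} {μ : FiniteMeasure (ℝ × ℝ)}
    (h : ∀ θ, Tendsto (fun k => charFn (μs k) θ) l (nhds (charFn μ θ))) :
    Tendsto μs l (nhds μ) := by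
  have hmass : Tendsto (fun k => (μs k).mass) l (nhds μ.mass) := by
    have h₀ := h 0
    simp only [charFn_zero] at h₀
    have hre := (Complex.continuous_re.tendsto _).comp h₀
    simp only [Complex.ofReal_re, Function.comp_def] at hre
    exact NNReal.tendsto_coe.1 hre
  rcases eq_or_ne μ 0 with rfl | hμ
  · exact FiniteMeasure.tendsto_zero_of_tendsto_zero_mass
      (by rwa [FiniteMeasure.zero_mass] at hmass)
  have hmass₀ : (μ.mass : ℂ) ≠ 0 := by
    exact_mod_cast μ.mass_nonzero_iff.2 hμ
  have hne : ∀ᶠ k in l, μs k ≠ 0 :=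
    (hmass.eventually_ne (μ.mass_nonzero_iff.2 hμ)).mono fun k => (μs k).mass_nonzero_iff.1
  refine FiniteMeasure.tendsto_of_tendsto_normalize_testAgainstNN_of_tendsto_mass
    (tendsto_probabilityMeasure_of_tendsto_charFn fun θ => ?_) hmass
  rw [charFn_normalize hμ]
  refine Tendsto.congr' (hne.mono fun k hk => (charFn_normalize hk θ).symm) ?_
  exact (((Complex.continuous_ofReal.comp NNReal.continuous_coe).tendsto _).comp hmass).inv₀
    hmass₀ |>.mul (h θ)

variable {Ω : Type*} [MeasurableSpace Ω] [TopologicalSpace Ω] {μs : ι → FiniteMeasure Ω}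
  {μ : FiniteMeasure Ω} {E : Set Ω}

lemma tendsto_finiteMeasure_apply [OpensMeasurableSpace Ω] [HasOuterApproxClosed Ω]
    (h : Tendsto μs l (nhds μ)) (hE : (μ : Measure Ω) (frontier E) = 0) :
    Tendsto (fun k => (μs k : Measure Ω) E) l (nhds ((μ : Measure Ω) E)) := by
  rcases isEmpty_or_nonempty Ω with hΩ | hΩ
  · simpa only [eq_empty_of_isEmpty E, measure_empty] using tendsto_const_nhds
  simp only [← FiniteMeasure.ennreal_coeFn_eq_coeFn_toMeasure, ENNReal.tendsto_coe]
  rcases eq_or_ne μ 0 with rfl | hμ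
  · refine tendsto_of_tendsto_of_tendsto_of_le_of_le tendsto_const_nhds ?_
      (fun k => zero_le) (fun k => (μs k).apply_le_mass E)
    simpa using h.mass
  have hfrontier : (μ.normalize : Measure Ω) (frontier E) = 0 := by
    rw [FiniteMeasure.toMeasure_normalize_eq_of_nonzero _ hμ, Measure.smul_apply, hE, smul_zero]
  simp only [FiniteMeasure.self_eq_mass_mul_normalize]
  refine h.mass.mul ?_
  have := ProbabilityMeasure.tendsto_measure_of_null_frontier_of_tendsto'
    (FiniteMeasure.tendsto_normalize_of_tendsto h hμ) hfrontier
  simpa only [← ProbabilityMeasure.ennreal_coeFn_eq_coeFn_toMeasure, ENNReal.tendsto_coe]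
    using this

theorem tendsto_setLIntegral_of_tendsto_finiteMeasure [OpensMeasurableSpace Ω]
    [HasOuterApproxClosed Ω] (h : Tendsto μs l (nhds μ)) (hE : MeasurableSet E)
    (hfr : (μ : Measure Ω) (frontier E) = 0) (g : BoundedContinuousFunction Ω NNReal) :
    Tendsto (fun k => ∫⁻ z in E, g z ∂(μs k : Measure Ω)) l
      (nhds (∫⁻ z in E, g z ∂(μ : Measure Ω))) := by
  have hgm : Measurable fun z => (g z : ℝ≥0∞) := by fun_prop
  let weighted (ν : FiniteMeasure Ω) : FiniteMeasure Ω :=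
    ⟨(ν : Measure Ω).withDensity fun z => g z, isFiniteMeasure_withDensity
      (g.lintegral_lt_top_of_nnreal _).ne⟩
  have hweighted : Tendsto (fun k => weighted (μs k)) l (nhds (weighted μ)) := by
    rw [FiniteMeasure.tendsto_iff_forall_lintegral_tendsto]
    intro f
    have hmul (ν : FiniteMeasure Ω) :
        ∫⁻ z, f z ∂(weighted ν : Measure Ω) = ∫⁻ z, (g * f) z ∂(ν : Measure Ω) := by
      refine (lintegral_withDensity_eq_lintegral_mul _ hgm (by fun_prop)).trans ?_
      simp only [Pi.mul_apply, BoundedContinuousFunction.coe_mul, ENNReal.coe_mul]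
    simp only [hmul]
    exact FiniteMeasure.tendsto_iff_forall_lintegral_tendsto.1 h (g * f)
  have hlim := tendsto_finiteMeasure_apply (E := E) hweighted
    (withDensity_absolutelyContinuous _ _ hfr)
  have happly (ν : FiniteMeasure Ω) :
      (weighted ν : Measure Ω) E = ∫⁻ z in E, g z ∂(ν : Measure Ω) := withDensity_apply _ hE
  simpa only [happly] using hlim

end WeakConvergence

section KernelConvergence

variable {ι : Type*} {l : Filter ι} {ν : ι → Measure (ℝ × ℝ)} {ν₀ : Measure (ℝ × ℝ)}

/-- The measure with density `planeKernel` with respect to `ν`. -/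
noncomputable def kernelMeasure (ν : Measure (ℝ × ℝ)) : Measure (ℝ × ℝ) :=
  ν.withDensity fun u => ENNReal.ofReal (planeKernel u)

/-- Convergence of possibly infinite measures after multiplication by `planeKernel`: the
products are finite measures whose characteristic functions converge pointwise. -/
structure KernelTendsto (ν : ι → Measure (ℝ × ℝ)) (l : Filter ι) (ν₀ : Measure (ℝ × ℝ)) :
    Prop where
  integrable (k : ι) : Integrable planeKernel (ν k)
  integrable_limit : Integrable planeKernel ν₀
  tendsto (θ : ℝ × ℝ) :
    Tendsto (fun k => ∫ u, planeKernel u * Complex.exp (pairing θ u * Complex.I) ∂(ν k)) l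
      (nhds (∫ u, planeKernel u * Complex.exp (pairing θ u * Complex.I) ∂ν₀))

lemma isFiniteMeasure_kernelMeasure {ν : Measure (ℝ × ℝ)} (hν : Integrable planeKernel ν) :
    IsFiniteMeasure (kernelMeasure ν) :=
  isFiniteMeasure_withDensity_ofReal hν.2

lemma kernelMeasure_univ (ν : Measure (ℝ × ℝ)) :
    kernelMeasure ν univ = ∫⁻ u, ENNReal.ofReal (planeKernel u) ∂ν := by
  rw [kernelMeasure, withDensity_apply _ MeasurableSet.univ, Measure.restrict_univ]

lemma charFn_kernelMeasure (ν : Measure (ℝ × ℝ)) (θ : ℝ × ℝ) :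
    charFn (kernelMeasure ν) θ =
      ∫ u, planeKernel u * Complex.exp (pairing θ u * Complex.I) ∂ν := by
  rw [charFn_apply, kernelMeasure, integral_withDensity_eq_integral_toReal_smul (by fun_prop)
    (ae_of_all _ fun u => ofReal_lt_top)]
  simp only [ENNReal.toReal_ofReal (planeKernel_pos _).le, Complex.real_smul]

lemma KernelTendsto.tendsto_finiteMeasure [l.IsCountablyGenerated] (h : KernelTendsto ν l ν₀) :
    Tendsto (β := FiniteMeasure (ℝ × ℝ))
      (fun k => ⟨kernelMeasure (ν k), isFiniteMeasure_kernelMeasure (h.integrable k)⟩) l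
      (nhds ⟨kernelMeasure ν₀, isFiniteMeasure_kernelMeasure h.integrable_limit⟩) := by
  refine tendsto_finiteMeasure_of_tendsto_charFn fun θ => ?_
  simpa only [FiniteMeasure.toMeasure_mk, charFn_kernelMeasure] using h.tendsto θ

lemma setLIntegral_ofReal_eq_setLIntegral_kernelMeasure (ν : Measure (ℝ × ℝ)) {E : Set (ℝ × ℝ)}
    (hE : MeasurableSet E) {G : ℝ × ℝ → ℝ} (hG : Measurable G) :
    ∫⁻ z in E, ENNReal.ofReal (G z / planeKernel z) ∂(kernelMeasure ν) =
      ∫⁻ z in E, ENNReal.ofReal (G z) ∂ν := by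
  rw [kernelMeasure,
    setLIntegral_withDensity_eq_setLIntegral_mul _ (by fun_prop) (by fun_prop) hE]
  refine setLIntegral_congr_fun hE fun z _ => ?_
  rw [Pi.mul_apply, ← ENNReal.ofReal_mul (planeKernel_pos z).le,
    mul_div_cancel₀ _ (planeKernel_pos z).ne']

lemma KernelTendsto.tendsto_setLIntegral [l.IsCountablyGenerated] (h : KernelTendsto ν l ν₀)
    {E : Set (ℝ × ℝ)} (hE : MeasurableSet E) (hfr : ν₀ (frontier E) = 0) {G : ℝ × ℝ → ℝ}
    (hG : Continuous G) {M : ℝ} (hGM : ∀ z ∈ E, G z ≤ M * planeKernel z) :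
    Tendsto (fun k => ∫⁻ z in E, ENNReal.ofReal (G z) ∂(ν k)) l
      (nhds (∫⁻ z in E, ENNReal.ofReal (G z) ∂ν₀)) := by
  let g : BoundedContinuousFunction (ℝ × ℝ) NNReal :=
    ⟨⟨fun z => (min (G z / planeKernel z) M).toNNReal, by
      have := fun z => (planeKernel_pos z).ne'
      fun_prop (disch := assumption)⟩, M.toNNReal, fun u w => by
      rw [NNReal.dist_eq]
      exact abs_sub_le_of_nonneg_of_le NNReal.zero_le_coe
        (NNReal.coe_le_coe.2 (Real.toNNReal_le_toNNReal (min_le_right _ _)))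
        NNReal.zero_le_coe (NNReal.coe_le_coe.2 (Real.toNNReal_le_toNNReal (min_le_right _ _)))⟩
  have hg (ρ : Measure (ℝ × ℝ)) :
      ∫⁻ z in E, g z ∂(kernelMeasure ρ) = ∫⁻ z in E, ENNReal.ofReal (G z) ∂ρ := by
    rw [← setLIntegral_ofReal_eq_setLIntegral_kernelMeasure ρ hE hG.measurable]
    refine setLIntegral_congr_fun hE fun z hz => congrArg ENNReal.ofReal ?_
    exact min_eq_left ((div_le_iff₀ (planeKernel_pos z)).2 (hGM z hz))
  have hlim := tendsto_setLIntegral_of_tendsto_finiteMeasure h.tendsto_finiteMeasure hE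
    (withDensity_absolutelyContinuous _ _ hfr) g
  simpa only [FiniteMeasure.toMeasure_mk, hg] using hlim

lemma setLIntegral_ofReal_le_mul_kernelMeasure (ν : Measure (ℝ × ℝ)) {E : Set (ℝ × ℝ)}
    (hE : MeasurableSet E) {G : ℝ × ℝ → ℝ} {M : ℝ} (hGM : ∀ z ∈ E, G z ≤ M * planeKernel z) :
    ∫⁻ z in E, ENNReal.ofReal (G z) ∂ν ≤ ENNReal.ofReal M * kernelMeasure ν univ := by
  rw [kernelMeasure_univ, ← lintegral_const_mul _ (by fun_prop)]
  refine (setLIntegral_mono' hE fun z hz => ?_).trans (setLIntegral_le_lintegral E _)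
  rw [← ENNReal.ofReal_mul' (planeKernel_pos z).le]
  exact ENNReal.ofReal_le_ofReal (hGM z hz)

lemma KernelTendsto.tendsto_lintegral_setLIntegral [l.IsCountablyGenerated]
    (h : KernelTendsto ν l ν₀) {α : Type*} [MeasurableSpace α] {μ : Measure α}
    {E : α → Set (ℝ × ℝ)} (hE : ∀ q, MeasurableSet (E q)) (hfr : ∀ q, ν₀ (frontier (E q)) = 0)
    {G : α → ℝ × ℝ → ℝ} (hG : ∀ q, Continuous (G q))
    (hmeas : ∀ k, Measurable fun q => ∫⁻ z in E q, ENNReal.ofReal (G q z) ∂(ν k))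
    {M : α → ℝ} (hM : Integrable M μ) (hGM : ∀ q, ∀ z ∈ E q, G q z ≤ M q * planeKernel z) :
    Tendsto (fun k => ∫⁻ q, ∫⁻ z in E q, ENNReal.ofReal (G q z) ∂(ν k) ∂μ) l
      (nhds (∫⁻ q, ∫⁻ z in E q, ENNReal.ofReal (G q z) ∂ν₀ ∂μ)) := by
  obtain ⟨B, hB⟩ : ∃ B : NNReal, ∀ᶠ k in l, kernelMeasure (ν k) univ ≤ B := by
    have hmass := h.tendsto_finiteMeasure.mass.eventually (gt_mem_nhds (lt_add_one _))
    exact ⟨_, hmass.mono fun k hk => FiniteMeasure.ennreal_mass.symm.trans_le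
      (ENNReal.coe_le_coe.2 hk.le)⟩
  refine tendsto_lintegral_filter_of_dominated_convergence
    (fun q => ENNReal.ofReal (M q) * B) (Eventually.of_forall hmeas) ?_ ?_
    (ae_of_all _ fun q => h.tendsto_setLIntegral (hE q) (hfr q) (hG q) (hGM q))
  · filter_upwards [hB] with k hk
    refine ae_of_all _ fun q => ?_
    exact (setLIntegral_ofReal_le_mul_kernelMeasure (ν k) (hE q) (hGM q)).trans (by gcongr)
  · rw [lintegral_mul_const' _ _ coe_ne_top]
    exact ENNReal.mul_ne_top hM.lintegral_lt_top.ne coe_ne_top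

end KernelConvergence

section RenewalMeasure

open ProbabilityTheory

/-- The renewal measure `∑ₙ μ^{⋆n}` reflected through `z / 2`, so that the last position before
crossing becomes the distance still to go, and multiplied by `√z.1`, which is the scale at which
it converges as `z` tends to infinity along the mean of `μ`. -/
noncomputable def scaledRenewal (μ : Measure (ℝ × ℝ)) (z : ℝ × ℝ) : Measure (ℝ × ℝ) :=
  ENNReal.ofReal √z.1 • Measure.sum fun n => (iterConv μ n).map (z - ·)

variable {μ : Measure (ℝ × ℝ)}

lemma lintegral_scaledRenewal (μ : Measure (ℝ × ℝ)) (z : ℝ × ℝ) {f : ℝ × ℝ → ℝ≥0∞}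
    (hf : Measurable f) :
    ∫⁻ u, f u ∂(scaledRenewal μ z) =
      ENNReal.ofReal √z.1 * ∑' n, ∫⁻ p, f (z - p) ∂(iterConv μ n) := by
  rw [scaledRenewal, lintegral_smul_measure, lintegral_sum_measure, smul_eq_mul]
  congr! 3 with n
  rw [lintegral_map hf (by fun_prop)]

variable [IsProbabilityMeasure μ]

instance sFinite_scaledRenewal (z : ℝ × ℝ) : SFinite (scaledRenewal μ z) := by
  unfold scaledRenewal
  infer_instance

lemma integrable_planeKernel_sum_map {z : ℝ × ℝ}
    (hs : Summable fun n => ∫ p, planeKernel (z - p) ∂(iterConv μ n)) :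
    Integrable planeKernel (Measure.sum fun n => (iterConv μ n).map (z - ·)) := by
  refine integrable_sum_measure_iff.2 ⟨fun n => ?_, hs.congr fun n => ?_⟩
  · exact (integrable_map_measure (by fun_prop) (by fun_prop)).2
      (integrable_planeKernel_sub (iterConv μ n) z)
  · simp only [Real.norm_of_nonneg (planeKernel_pos _).le]
    rw [integral_map (by fun_prop) (by fun_prop)]

lemma integral_planeKernel_mul_exp_scaledRenewal {z : ℝ × ℝ}
    (hs : Summable fun n => ∫ p, planeKernel (z - p) ∂(iterConv μ n)) (θ : ℝ × ℝ) :
    ∫ u, planeKernel u * Complex.exp (pairing θ u * Complex.I) ∂(scaledRenewal μ z) =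
      √z.1 * ∑' n, ∫ p, planeKernel (z - p) *
        Complex.exp (pairing θ (z - p) * Complex.I) ∂(iterConv μ n) := by
  have hint : Integrable (fun u => (planeKernel u : ℂ) * Complex.exp (pairing θ u * Complex.I))
      (Measure.sum fun n => (iterConv μ n).map (z - ·)) := by
    refine (integrable_planeKernel_sum_map hs).mono' (by fun_prop) (ae_of_all _ fun u => ?_)
    rw [norm_mul, Complex.norm_exp_ofReal_mul_I, mul_one, Complex.norm_real,
      Real.norm_of_nonneg (planeKernel_pos u).le]
  rw [scaledRenewal, integral_smul_measure, ENNReal.toReal_ofReal (Real.sqrt_nonneg _),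
    Complex.real_smul, integral_sum_measure hint]
  congr! 3 with n
  rw [integral_map (by fun_prop) (by fun_prop)]

theorem IsNonlattice.kernelTendsto_scaledRenewal (hnl : IsNonlattice μ) (hμ : MemLp id 2 μ)
    {m : ℝ × ℝ} (hm : ∫ p, p ∂μ = m) (hm₀ : 0 < m.1) {ι : Type*} {l : Filter ι}
    [l.IsCountablyGenerated] {z : ι → ℝ × ℝ} (hz : TendsToAlong z l m) :
    KernelTendsto (fun k => scaledRenewal μ (z k)) l
      (ENNReal.ofReal (√m.1 / √(2 * Real.pi * Var[pairing (-m.2, m.1); μ])) • volume) := by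
  have hfst : ∫ p, p.1 ∂μ = m.1 := hm ▸ (fst_integral (hμ.integrable one_le_two)).symm
  have hs := hnl.summable_integral_planeKernel hμ (hfst ▸ hm₀)
  refine ⟨fun k => (integrable_planeKernel_sum_map (hs (z k))).smul_measure ofReal_ne_top,
    integrable_planeKernel.smul_measure ofReal_ne_top, fun θ => ?_⟩
  simp only [integral_planeKernel_mul_exp_scaledRenewal (hs _)]
  convert hnl.tendsto_sqrt_mul_tsum_integral_planeKernel hμ hm hm₀ hz θ using 2
  rw [integral_smul_measure, ENNReal.toReal_ofReal (by positivity), integral_planeKernel_mul_exp,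
    Complex.real_smul]
  push_cast
  ring

end RenewalMeasure

section ExponentialTilting

/-- The exponential weight `p ↦ exp ⟨ζ, p⟩`; a step law and its tilted version are densities of one
another with respect to such a weight. -/
noncomputable def expWeight (ζ p : ℝ × ℝ) : ℝ≥0∞ := ENNReal.ofReal (Real.exp (pairing ζ p))

@[fun_prop]
lemma measurable_expWeight (ζ : ℝ × ℝ) : Measurable (expWeight ζ) := by
  unfold expWeight
  fun_prop

lemma expWeight_ne_top (ζ p : ℝ × ℝ) : expWeight ζ p ≠ ∞ := ofReal_ne_top

lemma expWeight_add (ζ p q : ℝ × ℝ) :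
    expWeight ζ (p + q) = expWeight ζ p * expWeight ζ q := by
  rw [expWeight, map_add, Real.exp_add, ENNReal.ofReal_mul (Real.exp_pos _).le, expWeight,
    expWeight]

lemma iterConv_withDensity_expWeight (μ : Measure (ℝ × ℝ)) [IsProbabilityMeasure μ]
    (ζ : ℝ × ℝ) (n : ℕ) :
    iterConv (μ.withDensity (expWeight ζ)) n = (iterConv μ n).withDensity (expWeight ζ) := by
  induction n with
  | zero =>
    rw [iterConv, iterConv, dirac_withDensity' (measurable_expWeight ζ)]
    simp [expWeight]
  | succ n ih =>
    ext s hs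
    rw [iterConv, mconv, ih, iterConv_succ, prod_withDensity (by fun_prop) (by fun_prop),
      withDensity_apply _ hs, Measure.conv,
      Measure.map_apply (by fun_prop) hs, setLIntegral_map hs (by fun_prop) (by fun_prop),
      withDensity_apply _ (hs.preimage (by fun_prop))]
    simp only [expWeight_add]

end ExponentialTilting

section Crossing

/-- The step `q` crosses the level `x + a` while ending above `y + b` exactly when the distance
`z = (x, y) - p` from the current position `p` to the target lies in this box. -/
def crossingBox (a b : ℝ) (q : ℝ × ℝ) : Set (ℝ × ℝ) := Ico 0 (q.1 - a) ×ˢ Iic (q.2 - b)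

/-- The tilted weight with which the step `q`, taken at distance `z` from the target, contributes
to the crossing probability. -/
noncomputable def crossingWeight (ζ : ℝ × ℝ) (a b : ℝ) (q z : ℝ × ℝ) : ℝ≥0∞ :=
  (crossingBox a b q).indicator (fun z => expWeight ζ (q - z)) z

lemma sub_mem_crossingBox {a b : ℝ} {p q z : ℝ × ℝ} :
    z - p ∈ crossingBox a b q ↔ p.1 ≤ z.1 ∧ z.1 + a < p.1 + q.1 ∧ z.2 + b ≤ p.2 + q.2 := by
  simp only [crossingBox, mem_prod, mem_Ico, mem_Iic, Prod.fst_sub, Prod.snd_sub, sub_nonneg,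
    and_assoc]
  refine and_congr_right' (and_congr ?_ ?_) <;> constructor <;> intro h <;> linarith

lemma measurableSet_crossingBox (a b : ℝ) (q : ℝ × ℝ) : MeasurableSet (crossingBox a b q) :=
  measurableSet_Ico.prod measurableSet_Iic

lemma volume_frontier_crossingBox (a b : ℝ) (q : ℝ × ℝ) :
    volume (frontier (crossingBox a b q)) = 0 :=
  ((convex_Ico _ _).prod (convex_Iic _)).addHaar_frontier _

lemma measurable_crossingWeight (ζ : ℝ × ℝ) (a b : ℝ) :
    Measurable fun w : (ℝ × ℝ) × (ℝ × ℝ) => crossingWeight ζ a b w.1 w.2 := by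
  have hbox : MeasurableSet {w : (ℝ × ℝ) × (ℝ × ℝ) | w.2 ∈ crossingBox a b w.1} := by
    simp only [crossingBox, mem_prod, mem_Ico, mem_Iic]
    measurability
  exact Measurable.indicator (f := fun w : (ℝ × ℝ) × (ℝ × ℝ) => expWeight ζ (w.1 - w.2))
    (by fun_prop) hbox

lemma lintegral_crossingWeight (ζ : ℝ × ℝ) (a b : ℝ) (q : ℝ × ℝ) (ν : Measure (ℝ × ℝ)) :
    ∫⁻ z, crossingWeight ζ a b q z ∂ν =
      ∫⁻ z in crossingBox a b q, ENNReal.ofReal (Real.exp (pairing ζ (q - z))) ∂ν :=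
  lintegral_indicator (measurableSet_crossingBox a b q) _

lemma expWeight_mul_expWeight_mul_crossingIndicator (ζ : ℝ × ℝ) (a b : ℝ) {p z : ℝ × ℝ}
    (hp : p.1 ≤ z.1) (q : ℝ × ℝ) :
    expWeight ζ p * {q : ℝ × ℝ | z.1 + a < p.1 + q.1 ∧ z.2 + b ≤ p.2 + q.2}.indicator
        (expWeight ζ) q =
      expWeight ζ z * crossingWeight ζ a b q (z - p) := by
  have hmem : q ∈ {q : ℝ × ℝ | z.1 + a < p.1 + q.1 ∧ z.2 + b ≤ p.2 + q.2} ↔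
      z - p ∈ crossingBox a b q := by
    rw [sub_mem_crossingBox]
    exact (and_iff_right hp).symm
  by_cases hq : z - p ∈ crossingBox a b q
  · rw [indicator_of_mem (hmem.2 hq), crossingWeight, indicator_of_mem hq, ← expWeight_add,
      ← expWeight_add]
    congr 1
    abel
  · rw [indicator_of_notMem (mt hmem.1 hq), crossingWeight, indicator_of_notMem hq, mul_zero,
      mul_zero]

lemma crossingWeight_sub_of_lt (ζ : ℝ × ℝ) (a b : ℝ) {p z : ℝ × ℝ} (hp : z.1 < p.1) (q : ℝ × ℝ) :
    crossingWeight ζ a b q (z - p) = 0 :=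
  indicator_of_notMem (fun h => hp.not_ge (sub_mem_crossingBox.1 h).1) _

variable (μ : Measure (ℝ × ℝ)) (ζ : ℝ × ℝ) (a b : ℝ)

lemma measurableSet_crossing (x y : ℝ) :
    MeasurableSet {w : (ℝ × ℝ) × (ℝ × ℝ) | x + a < w.1.1 + w.2.1 ∧ y + b ≤ w.1.2 + w.2.2} := by
  measurability

lemma measurable_measure_crossing (F : Measure (ℝ × ℝ)) [SFinite F] (x y : ℝ) :
    Measurable fun p : ℝ × ℝ => F {q : ℝ × ℝ | x + a < p.1 + q.1 ∧ y + b ≤ p.2 + q.2} :=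
  measurable_measure_prodMk_left (measurableSet_crossing a b x y)

lemma indicator_expWeight_mul_crossing (p z : ℝ × ℝ) :
    {p : ℝ × ℝ | p.1 ≤ z.1}.indicator (fun p => expWeight ζ p * μ.withDensity (expWeight ζ)
        {q : ℝ × ℝ | z.1 + a < p.1 + q.1 ∧ z.2 + b ≤ p.2 + q.2}) p =
      expWeight ζ z * ∫⁻ q, crossingWeight ζ a b q (z - p) ∂μ := by
  rcases le_or_gt p.1 z.1 with hp | hp
  · have hset : MeasurableSet {q : ℝ × ℝ | z.1 + a < p.1 + q.1 ∧ z.2 + b ≤ p.2 + q.2} :=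
      measurable_prodMk_left (measurableSet_crossing a b z.1 z.2)
    rw [indicator_of_mem (by exact hp), withDensity_apply _ hset, ← lintegral_indicator hset,
      ← lintegral_const_mul' _ _ (expWeight_ne_top _ _),
      ← lintegral_const_mul' _ _ (expWeight_ne_top _ _)]
    simp only [expWeight_mul_expWeight_mul_crossingIndicator ζ a b hp]
  · rw [indicator_of_notMem (by exact hp.not_ge)]
    simp only [crossingWeight_sub_of_lt ζ a b hp, lintegral_zero, mul_zero]

variable [IsProbabilityMeasure μ]

lemma hoglundK_withDensity_expWeight (x y : ℝ) :
    hoglundK (μ.withDensity (expWeight ζ)) a b x y = expWeight ζ (x, y) *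
      ∑' n, ∫⁻ p, ∫⁻ q, crossingWeight ζ a b q ((x, y) - p) ∂μ ∂(iterConv μ n) := by
  rw [hoglundK, ← ENNReal.tsum_mul_left]
  congr! 2 with n
  have hset : MeasurableSet {p : ℝ × ℝ | p.1 ≤ x} := measurableSet_le (by fun_prop) (by fun_prop)
  rw [iterConv_withDensity_expWeight,
    setLIntegral_withDensity_eq_setLIntegral_mul _ (by fun_prop)
      (measurable_measure_crossing a b _ x y) hset,
    ← lintegral_indicator hset, ← lintegral_const_mul' _ _ (expWeight_ne_top _ _)]
  exact lintegral_congr fun p => indicator_expWeight_mul_crossing μ ζ a b p (x, y)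

lemma ofReal_sqrt_mul_hoglundK (x y : ℝ) :
    ENNReal.ofReal √x * hoglundK (μ.withDensity (expWeight ζ)) a b x y = expWeight ζ (x, y) *
      ∫⁻ q, ∫⁻ z, crossingWeight ζ a b q z ∂(scaledRenewal μ (x, y)) ∂μ := by
  have hmeas : Measurable (Function.uncurry fun z q => crossingWeight ζ a b q z) :=
    (measurable_crossingWeight ζ a b).comp measurable_swap
  rw [hoglundK_withDensity_expWeight, mul_left_comm, ← lintegral_scaledRenewal μ (x, y)
      (f := fun z => ∫⁻ q, crossingWeight ζ a b q z ∂μ)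
      hmeas.lintegral_prod_right',
    lintegral_lintegral_swap hmeas.aemeasurable]

end Crossing

section CrossingBound

lemma exp_mul_sub_le_one_add_exp (ξ : ℝ) {x z : ℝ} (hz : 0 ≤ z) (hzx : z ≤ x) :
    Real.exp (ξ * (x - z)) ≤ 1 + Real.exp (ξ * x) := by
  rcases le_total 0 ξ with hξ | hξ
  · exact (Real.exp_le_exp.2 (by gcongr; linarith)).trans (le_add_of_nonneg_left zero_le_one)
  · exact (Real.exp_le_one_iff.2 (mul_nonpos_of_nonpos_of_nonneg hξ (sub_nonneg.2 hzx))).trans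
      (le_add_of_nonneg_right (Real.exp_pos _).le)

lemma one_add_add_sq_le (x y : ℝ) : 1 + (x + y) ^ 2 ≤ 2 * (1 + x ^ 2) * (1 + y ^ 2) := by
  nlinarith [sq_nonneg (x - y), sq_nonneg (x * y)]

lemma one_add_sq_le_mul_exp {η s : ℝ} (hη : η < 0) (hs : 0 ≤ s) :
    1 + s ^ 2 ≤ (1 + 2 / η ^ 2) * Real.exp (-η * s) := by
  have hquad := Real.quadratic_le_exp_of_nonneg (mul_nonneg (neg_pos.2 hη).le hs)
  have hone : 1 ≤ Real.exp (-η * s) := Real.one_le_exp (mul_nonneg (neg_pos.2 hη).le hs)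
  have hsq : s ^ 2 ≤ 2 / η ^ 2 * Real.exp (-η * s) := by
    rw [div_mul_eq_mul_div, le_div_iff₀ (sq_pos_of_neg hη)]
    nlinarith [mul_nonneg (neg_pos.2 hη).le hs]
  linarith

lemma one_add_sq_mul_exp_le {η b u : ℝ} (hη : η < 0) (hu : b ≤ u) :
    (1 + u ^ 2) * Real.exp (η * u) ≤ 2 * (1 + b ^ 2) * (1 + 2 / η ^ 2) * Real.exp (η * b) := by
  have hsplit : 1 + u ^ 2 ≤ 2 * (1 + b ^ 2) * (1 + (u - b) ^ 2) := by
    simpa only [add_sub_cancel] using one_add_add_sq_le b (u - b)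
  calc (1 + u ^ 2) * Real.exp (η * u)
      ≤ 2 * (1 + b ^ 2) * ((1 + 2 / η ^ 2) * Real.exp (-η * (u - b))) * Real.exp (η * u) := by
        refine mul_le_mul_of_nonneg_right (hsplit.trans ?_) (Real.exp_pos _).le
        gcongr
        exact one_add_sq_le_mul_exp hη (sub_nonneg.2 hu)
    _ = 2 * (1 + b ^ 2) * (1 + 2 / η ^ 2) * (Real.exp (-η * (u - b)) * Real.exp (η * u)) := by
        ring
    _ = 2 * (1 + b ^ 2) * (1 + 2 / η ^ 2) * Real.exp (η * b) := by
        rw [← Real.exp_add]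
        ring_nf

lemma one_le_mul_planeKernel (z : ℝ × ℝ) :
    1 ≤ 25 * ((1 + z.1 ^ 2) * (1 + z.2 ^ 2)) * planeKernel z := by
  refine (one_le_mul_of_one_le_of_one_le (one_le_mul_posKernel z.1)
    (one_le_mul_posKernel z.2)).trans_eq ?_
  rw [planeKernel]
  ring

/-- The weight controlling the tilted crossing contribution of a step uniformly in the starting
position. -/
noncomputable def momentWeight (ξ : ℝ) (q : ℝ × ℝ) : ℝ :=
  (1 + q.1 ^ 2) * (1 + q.2 ^ 2) * (1 + Real.exp (ξ * q.1))

lemma exists_exp_le_momentWeight_mul_planeKernel {ζ : ℝ × ℝ} (hζ : ζ.2 < 0) {a : ℝ} (ha : 0 ≤ a)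
    (b : ℝ) :
    ∃ C, ∀ q, ∀ z ∈ crossingBox a b q,
      Real.exp (pairing ζ (q - z)) ≤ C * momentWeight ζ.1 q * planeKernel z := by
  set D := 2 * (1 + b ^ 2) * (1 + 2 / ζ.2 ^ 2) * Real.exp (ζ.2 * b)
  refine ⟨50 * D, fun q z ⟨⟨hz₀, hz₁⟩, hz₂⟩ => ?_⟩
  rw [mem_Iic] at hz₂
  have hker := planeKernel_pos z
  have hsq₁ : 1 + z.1 ^ 2 ≤ 1 + q.1 ^ 2 := by
    gcongr
    linarith
  have hsq₂ : 1 + z.2 ^ 2 ≤ 2 * (1 + q.2 ^ 2) * (1 + (q.2 - z.2) ^ 2) := by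
    convert one_add_add_sq_le q.2 (-(q.2 - z.2)) using 2 <;> ring
  have hexp₁ : Real.exp (ζ.1 * (q.1 - z.1)) ≤ 1 + Real.exp (ζ.1 * q.1) :=
    exp_mul_sub_le_one_add_exp _ hz₀ (by linarith)
  have hexp₂ : (1 + (q.2 - z.2) ^ 2) * Real.exp (ζ.2 * (q.2 - z.2)) ≤ D :=
    one_add_sq_mul_exp_le hζ (by linarith)
  calc Real.exp (pairing ζ (q - z))
      = Real.exp (ζ.1 * (q.1 - z.1)) * Real.exp (ζ.2 * (q.2 - z.2)) := Real.exp_add _ _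
    _ ≤ Real.exp (ζ.1 * (q.1 - z.1)) * Real.exp (ζ.2 * (q.2 - z.2)) *
          (25 * ((1 + z.1 ^ 2) * (1 + z.2 ^ 2)) * planeKernel z) :=
        le_mul_of_one_le_right (by positivity) (one_le_mul_planeKernel z)
    _ ≤ (1 + Real.exp (ζ.1 * q.1)) * Real.exp (ζ.2 * (q.2 - z.2)) *
          (25 * ((1 + q.1 ^ 2) * (2 * (1 + q.2 ^ 2) * (1 + (q.2 - z.2) ^ 2))) *
            planeKernel z) := by
        gcongr
    _ = 50 * ((1 + (q.2 - z.2) ^ 2) * Real.exp (ζ.2 * (q.2 - z.2))) *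
          momentWeight ζ.1 q * planeKernel z := by
        rw [momentWeight]
        ring
    _ ≤ 50 * D * momentWeight ζ.1 q * planeKernel z := by
        have : 0 ≤ momentWeight ζ.1 q := by
          unfold momentWeight
          positivity
        gcongr

end CrossingBound

section CrossingLimit

lemma setLIntegral_comp_sub (f : ℝ → ℝ≥0∞) (t : ℝ) (S : Set ℝ) :
    ∫⁻ z in (fun z => t - z) ⁻¹' S, f (t - z) = ∫⁻ w in S, f w :=
  (Measure.measurePreserving_sub_left volume t).setLIntegral_comp_preimage_emb
    (MeasurableEquiv.subLeft t).measurableEmbedding f S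

lemma lintegral_Ici_exp_mul {η : ℝ} (hη : η < 0) (b : ℝ) :
    ∫⁻ w in Ici b, ENNReal.ofReal (Real.exp (η * w)) =
      ENNReal.ofReal (Real.exp (b * η) / |η|) := by
  rw [setLIntegral_congr Ioi_ae_eq_Ici.symm,
    ← ofReal_integral_eq_lintegral_ofReal (integrableOn_exp_mul_Ioi hη b)
      (ae_of_all _ fun _ => (Real.exp_pos _).le),
    integral_exp_mul_Ioi hη b, abs_of_neg hη, mul_comm, div_neg, neg_div]

lemma lintegral_crossingWeight_volume {ζ : ℝ × ℝ} (hζ : ζ.2 < 0) (a b : ℝ) (q : ℝ × ℝ) :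
    ∫⁻ z, crossingWeight ζ a b q z = ENNReal.ofReal (Real.exp (b * ζ.2) / |ζ.2|) *
      ∫⁻ s in Ioc a q.1, ENNReal.ofReal (Real.exp (ζ.1 * s)) := by
  have hprod (z : ℝ × ℝ) : ENNReal.ofReal (Real.exp (pairing ζ (q - z))) =
      ENNReal.ofReal (Real.exp (ζ.1 * (q.1 - z.1))) *
        ENNReal.ofReal (Real.exp (ζ.2 * (q.2 - z.2))) := by
    rw [← ENNReal.ofReal_mul (Real.exp_pos _).le, ← Real.exp_add]
    rfl
  have hfst : (fun z => q.1 - z) ⁻¹' Ioc a q.1 = Ico 0 (q.1 - a) := by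
    simp only [preimage_const_sub_Ioc, sub_self]
  have hsnd : (fun z => q.2 - z) ⁻¹' Ici b = Iic (q.2 - b) := preimage_const_sub_Ici _ _
  simp only [lintegral_crossingWeight, hprod]
  rw [crossingBox, Measure.volume_eq_prod, ← Measure.prod_restrict,
    lintegral_prod_mul (f := fun z => ENNReal.ofReal (Real.exp (ζ.1 * (q.1 - z))))
      (g := fun z => ENNReal.ofReal (Real.exp (ζ.2 * (q.2 - z)))) (by fun_prop) (by fun_prop),
    ← hfst, ← hsnd, setLIntegral_comp_sub (fun w => ENNReal.ofReal (Real.exp (ζ.1 * w))),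
    setLIntegral_comp_sub (fun w => ENNReal.ofReal (Real.exp (ζ.2 * w))),
    lintegral_Ici_exp_mul hζ, mul_comm]

lemma lintegral_lintegral_Ioc {α : Type*} [MeasurableSpace α] (μ : Measure α) [SFinite μ]
    {g : α → ℝ} (hg : Measurable g) {f : ℝ → ℝ≥0∞} (hf : Measurable f) (a : ℝ) :
    ∫⁻ x, ∫⁻ s in Ioc a (g x), f s ∂volume ∂μ = ∫⁻ s in Ioi a, μ {x | s ≤ g x} * f s := by
  have hmeas : Measurable (Function.uncurry fun x => (Iic (g x)).indicator f) :=
    (hf.comp measurable_snd).indicator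
      (measurableSet_le measurable_snd (hg.comp measurable_fst))
  have hind (x : α) : ∫⁻ s in Ioc a (g x), f s = ∫⁻ s in Ioi a, (Iic (g x)).indicator f s := by
    rw [setLIntegral_indicator measurableSet_Iic, inter_comm, Ioi_inter_Iic]
  simp only [hind]
  rw [lintegral_lintegral_swap hmeas.aemeasurable]
  refine lintegral_congr fun s => ?_
  rw [mul_comm, ← lintegral_indicator_const (measurableSet_le measurable_const hg)]
  rfl

lemma lintegral_lintegral_crossingWeight_volume (μ : Measure (ℝ × ℝ)) [IsFiniteMeasure μ]
    {ζ : ℝ × ℝ} (hζ : ζ.2 < 0) (a b : ℝ) :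
    ∫⁻ q, ∫⁻ z, crossingWeight ζ a b q z ∂volume ∂μ = ENNReal.ofReal (Real.exp (b * ζ.2) / |ζ.2|) *
      ∫⁻ s in Ioi a, ENNReal.ofReal ((μ {p | s ≤ p.1}).toReal * Real.exp (ζ.1 * s)) := by
  simp only [lintegral_crossingWeight_volume hζ]
  rw [lintegral_const_mul' _ _ ofReal_ne_top,
    lintegral_lintegral_Ioc μ measurable_fst (by fun_prop)]
  simp only [ENNReal.ofReal_mul toReal_nonneg, ofReal_toReal (measure_ne_top μ _)]

lemma lintegral_lintegral_crossingWeight_ne_top {μ : Measure (ℝ × ℝ)} {ζ : ℝ × ℝ}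
    (hζ : ζ.2 < 0) (hμ : Integrable (momentWeight ζ.1) μ) {a : ℝ} (ha : 0 ≤ a) (b : ℝ) :
    ∫⁻ q, ∫⁻ z, crossingWeight ζ a b q z ∂volume ∂μ ≠ ∞ := by
  obtain ⟨C, hC⟩ := exists_exp_le_momentWeight_mul_planeKernel hζ ha b
  have := isFiniteMeasure_kernelMeasure integrable_planeKernel
  refine ne_top_of_le_ne_top ?_ (lintegral_mono fun q =>
    (lintegral_crossingWeight ζ a b q _).trans_le
      (setLIntegral_ofReal_le_mul_kernelMeasure _ (measurableSet_crossingBox a b q) (hC q)))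
  rw [lintegral_mul_const' _ _ (measure_ne_top _ _)]
  exact ENNReal.mul_ne_top (hμ.const_mul C).lintegral_lt_top.ne (measure_ne_top _ _)

lemma toReal_lintegral_lintegral_crossingWeight {μ : Measure (ℝ × ℝ)} [IsFiniteMeasure μ]
    {ζ : ℝ × ℝ} (hζ : ζ.2 < 0) (a b : ℝ) :
    (∫⁻ q, ∫⁻ z, crossingWeight ζ a b q z ∂volume ∂μ).toReal = Real.exp (b * ζ.2) / |ζ.2| *
      ∫ s in Ioi a, (μ {p | s ≤ p.1}).toReal * Real.exp (ζ.1 * s) := by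
  have htail : Antitone fun s => (μ {p : ℝ × ℝ | s ≤ p.1}).toReal := fun s t hst =>
    measureReal_mono fun p hp => hst.trans hp
  have hmeas := htail.measurable
  rw [lintegral_lintegral_crossingWeight_volume μ hζ, toReal_mul,
    toReal_ofReal (by positivity), integral_eq_lintegral_of_nonneg_ae
      (ae_of_all _ fun s => mul_nonneg toReal_nonneg (Real.exp_pos _).le) (by fun_prop)]

open ProbabilityTheory

variable {μ : Measure (ℝ × ℝ)} [IsProbabilityMeasure μ]

lemma IsNonlattice.tendsto_lintegral_lintegral_crossingWeight_scaledRenewal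
    (hnl : IsNonlattice μ) (hμ : MemLp id 2 μ) {m : ℝ × ℝ} (hm : ∫ p, p ∂μ = m) (hm₀ : 0 < m.1)
    {ζ : ℝ × ℝ} (hζ : ζ.2 < 0) (hmom : Integrable (momentWeight ζ.1) μ) {a : ℝ} (ha : 0 ≤ a)
    (b : ℝ) {ι : Type*} {l : Filter ι} [l.IsCountablyGenerated] {z : ι → ℝ × ℝ}
    (hz : TendsToAlong z l m) :
    Tendsto (fun k => ∫⁻ q, ∫⁻ u, crossingWeight ζ a b q u ∂(scaledRenewal μ (z k)) ∂μ) l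
      (nhds (ENNReal.ofReal (√m.1 / √(2 * Real.pi * Var[pairing (-m.2, m.1); μ])) *
        ∫⁻ q, ∫⁻ u, crossingWeight ζ a b q u ∂volume ∂μ)) := by
  obtain ⟨C, hC⟩ := exists_exp_le_momentWeight_mul_planeKernel hζ ha b
  have hmeas (k : ι) :
      Measurable fun q => ∫⁻ u, crossingWeight ζ a b q u ∂(scaledRenewal μ (z k)) :=
    (measurable_crossingWeight ζ a b).lintegral_prod_right'
  simp only [lintegral_crossingWeight] at hmeas
  have hlim := (hnl.kernelTendsto_scaledRenewal hμ hm hm₀ hz).tendsto_lintegral_setLIntegral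
    (measurableSet_crossingBox a b)
    (fun q => by rw [Measure.smul_apply, volume_frontier_crossingBox, smul_zero])
    (fun q => by fun_prop) hmeas (hmom.const_mul C) hC
  simpa only [lintegral_crossingWeight, Measure.restrict_smul, lintegral_smul_measure,
    smul_eq_mul, lintegral_const_mul' _ _ ofReal_ne_top] using hlim

end CrossingLimit

/-! ### Condition (G) and nonlattice laws -/

section Support

lemma msupport_mono {μ ν : Measure (ℝ × ℝ)} (h : μ ≪ ν) : msupport μ ⊆ msupport ν :=
  fun _ hp U hU hpU => pos_iff_ne_zero.2 fun h₀ => (hp U hU hpU).ne' (h h₀)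

lemma msupport_subset_of_ae_mem {μ : Measure (ℝ × ℝ)} {s : Set (ℝ × ℝ)} (hs : IsClosed s)
    (h : ∀ᵐ p ∂μ, p ∈ s) : msupport μ ⊆ s := by
  intro p hp
  by_contra hps
  exact (hp sᶜ hs.isOpen_compl hps).ne' h

lemma pairing_surjective {θ : ℝ × ℝ} (hθ : θ ≠ 0) : Function.Surjective (pairing θ) := by
  refine LinearMap.surjective (f := (pairing θ : (ℝ × ℝ) →ₗ[ℝ] ℝ)) fun h => hθ (Prod.ext ?_ ?_)
  · simpa [pairing_apply] using LinearMap.congr_fun h (1, 0)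
  · simpa [pairing_apply] using LinearMap.congr_fun h (0, 1)

-- A characteristic function attains the bound `1` only if the phase is almost surely constant,
-- because the disc is strictly convex.
lemma exists_ae_circleExp_eq {μ : Measure (ℝ × ℝ)} [IsProbabilityMeasure μ] {θ : ℝ × ℝ}
    (h : 1 ≤ ‖charFn μ θ‖) : ∃ c : Circle, ∀ᵐ p ∂μ, Circle.exp (pairing θ p) = c := by
  rw [charFn_apply] at h
  have hbound : ∀ᵐ p ∂μ, ‖Complex.exp (pairing θ p * Complex.I)‖ ≤ 1 :=
    ae_of_all _ fun p => (Complex.norm_exp_ofReal_mul_I _).le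
  rcases ae_eq_const_or_norm_integral_lt_of_norm_le_const hbound with hconst | hlt
  · obtain ⟨p₀, hp₀⟩ := hconst.exists
    refine ⟨Circle.exp (pairing θ p₀), hconst.mono fun p hp => Circle.ext ?_⟩
    rw [Circle.coe_exp, Circle.coe_exp]
    exact hp.trans hp₀.symm
  · rw [probReal_univ, one_mul] at hlt
    exact absurd hlt h.not_gt

lemma not_surjective_circle_zpow (c : Circle) : ¬ Function.Surjective fun k : ℤ => c ^ k := by
  intro hsurj
  have : Countable Circle := hsurj.countable
  have hcount : (Ioc (-Real.pi) Real.pi).Countable := Circle.argEquiv.symm.injective.countable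
  linarith [Cardinal.Real.Ioc_countable_iff.1 hcount, Real.pi_pos]

lemma isNonlattice_of_closure_msupport_eq_top {μ : Measure (ℝ × ℝ)} [IsProbabilityMeasure μ]
    (h : AddSubgroup.closure (msupport μ) = ⊤) : IsNonlattice μ := by
  intro θ hθ
  by_contra! hone
  obtain ⟨c, hc⟩ := exists_ae_circleExp_eq hone
  let phase : ℝ × ℝ →+ Additive Circle := Circle.expHom.comp (pairing θ : ℝ × ℝ →+ ℝ)
  have hclosed : IsClosed {p | Circle.exp (pairing θ p) = c} :=
    isClosed_eq (by fun_prop) continuous_const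
  have hpowers : AddSubgroup.closure (msupport μ) ≤
      (AddSubgroup.zmultiples (Additive.ofMul c)).comap phase :=
    (AddSubgroup.closure_le _).2 fun p hp => ⟨1, (one_zsmul _).trans
      (congrArg Additive.ofMul (msupport_subset_of_ae_mem hclosed hc hp)).symm⟩
  refine not_surjective_circle_zpow c fun w => ?_
  obtain ⟨t, rfl⟩ := Circle.exp_surjective w
  obtain ⟨p, rfl⟩ := pairing_surjective hθ t
  exact hpowers (h ▸ AddSubgroup.mem_top p)

lemma addSubgroup_eq_top_of_quadrant_subset {H : AddSubgroup (ℝ × ℝ)}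
    (h : {p : ℝ × ℝ | 0 ≤ p.1 ∧ 0 ≤ p.2} ⊆ H) : H = ⊤ := by
  refine eq_top_iff.2 fun p _ => ?_
  rw [← posPart_sub_negPart p]
  exact H.sub_mem (h ⟨(posPart_nonneg p).1, (posPart_nonneg p).2⟩)
    (h ⟨(negPart_nonneg p).1, (negPart_nonneg p).2⟩)

end Support

/-! ### The tilted step law -/

section TiltedLaw

lemma expWeight_neg (ζ : ℝ × ℝ) :
    expWeight (-ζ) = fun p => ENNReal.ofReal (Real.exp (-(ζ.1 * p.1 + ζ.2 * p.2))) := by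
  ext p
  rw [expWeight, map_neg, neg_apply, pairing_apply]

lemma expWeight_mul_expWeight (ζ ζ' p : ℝ × ℝ) :
    expWeight ζ p * expWeight ζ' p = expWeight (ζ + ζ') p := by
  rw [expWeight, expWeight, expWeight, ← ENNReal.ofReal_mul (Real.exp_pos _).le, ← Real.exp_add,
    map_add, add_apply]

variable (F : Measure (ℝ × ℝ))

lemma biLaplace_eq_lintegral_expWeight (ζ : ℝ × ℝ) :
    biLaplace F ζ.1 ζ.2 = ∫⁻ p, expWeight (-ζ) p ∂F := by
  rw [expWeight_neg, biLaplace]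

lemma withDensity_expWeight_neg_withDensity_expWeight (ζ : ℝ × ℝ) :
    (F.withDensity (expWeight (-ζ))).withDensity (expWeight ζ) = F := by
  have hone : expWeight (-ζ) * expWeight ζ = 1 := by
    ext p
    rw [Pi.mul_apply, expWeight_mul_expWeight, neg_add_cancel]
    simp [expWeight]
  rw [← withDensity_mul _ (by fun_prop) (by fun_prop), hone, withDensity_one]

lemma absolutelyContinuous_withDensity_expWeight (ζ : ℝ × ℝ) : F ≪ F.withDensity (expWeight ζ) :=
  withDensity_absolutelyContinuous' (by fun_prop)
    (ae_of_all _ fun _ => (ENNReal.ofReal_pos.2 (Real.exp_pos _)).ne')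

variable {F}

lemma isProbabilityMeasure_tilted {ζ : ℝ × ℝ} (h : biLaplace F ζ.1 ζ.2 = 1) :
    IsProbabilityMeasure (F.withDensity (expWeight (-ζ))) :=
  ⟨by rwa [withDensity_apply _ .univ, setLIntegral_univ, ← biLaplace_eq_lintegral_expWeight]⟩

lemma integrable_exp_pairing_tilted {ζ α : ℝ × ℝ}
    (h : biLaplace F (ζ - α).1 (ζ - α).2 < ∞) :
    Integrable (fun p => Real.exp (pairing α p)) (F.withDensity (expWeight (-ζ))) := by
  refine ⟨by fun_prop, ?_⟩
  rw [hasFiniteIntegral_iff_ofReal (ae_of_all _ fun _ => (Real.exp_pos _).le)]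
  refine lt_of_eq_of_lt ?_ h
  change ∫⁻ p, expWeight α p ∂_ = _
  rw [lintegral_withDensity_eq_lintegral_mul _ (by fun_prop) (by fun_prop),
    biLaplace_eq_lintegral_expWeight]
  refine lintegral_congr fun p => ?_
  rw [Pi.mul_apply, expWeight_mul_expWeight, neg_sub, neg_add_eq_sub]

end TiltedLaw

section Moments

open ProbabilityTheory

variable {μ : Measure (ℝ × ℝ)}

lemma integrable_momentWeight (hμ : ∀ᵐ p ∂μ, 0 ≤ p.1 ∧ 0 ≤ p.2) {ξ δ : ℝ} (hδ : 0 < δ)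
    (h₀ : Integrable (fun p => Real.exp (pairing (δ, δ) p)) μ)
    (h₁ : Integrable (fun p => Real.exp (pairing (ξ + δ, δ) p)) μ) :
    Integrable (momentWeight ξ) μ := by
  have hsq {s : ℝ} (hs : 0 ≤ s) : 1 + s ^ 2 ≤ (1 + 2 / δ ^ 2) * Real.exp (δ * s) := by
    simpa using one_add_sq_le_mul_exp (neg_neg_of_pos hδ) hs
  refine ((h₀.add h₁).const_mul ((1 + 2 / δ ^ 2) ^ 2)).mono'
    (Continuous.aestronglyMeasurable (by unfold momentWeight; fun_prop)) ?_
  filter_upwards [hμ] with p hp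
  rw [momentWeight, Real.norm_of_nonneg (by positivity)]
  calc (1 + p.1 ^ 2) * (1 + p.2 ^ 2) * (1 + Real.exp (ξ * p.1))
      ≤ ((1 + 2 / δ ^ 2) * Real.exp (δ * p.1)) * ((1 + 2 / δ ^ 2) * Real.exp (δ * p.2)) *
          (1 + Real.exp (ξ * p.1)) := by
        gcongr
        exacts [hsq hp.1, hsq hp.2]
    _ = (1 + 2 / δ ^ 2) ^ 2 * (Real.exp (pairing (δ, δ) p) +
          Real.exp (pairing (ξ + δ, δ) p)) := by
        simp only [pairing_apply, add_mul, Real.exp_add]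
        ring

lemma memLp_two_of_integrable_momentWeight {ξ : ℝ} (h : Integrable (momentWeight ξ) μ) :
    MemLp id 2 μ := by
  rw [memLp_two_iff_integrable_sq_norm (by fun_prop)]
  refine h.mono' (by fun_prop) (ae_of_all _ fun p => ?_)
  have hexp := Real.exp_pos (ξ * p.1)
  rw [Real.norm_of_nonneg (by positivity), id, momentWeight, Prod.norm_def]
  rcases max_choice ‖p.1‖ ‖p.2‖ with hmax | hmax <;> rw [hmax, Real.norm_eq_abs, sq_abs]
  · nlinarith [mul_nonneg (sq_nonneg p.1) (sq_nonneg p.2),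
      mul_nonneg (by positivity : 0 ≤ (1 + p.1 ^ 2) * (1 + p.2 ^ 2)) hexp.le, sq_nonneg p.2]
  · nlinarith [mul_nonneg (sq_nonneg p.1) (sq_nonneg p.2),
      mul_nonneg (by positivity : 0 ≤ (1 + p.1 ^ 2) * (1 + p.2 ^ 2)) hexp.le, sq_nonneg p.1]

lemma IsNonlattice.integral_pairing_pos [IsProbabilityMeasure μ] (hnl : IsNonlattice μ)
    (hμ : MemLp id 2 μ) {θ : ℝ × ℝ} (hθ : θ ≠ 0) (hnn : ∀ᵐ p ∂μ, 0 ≤ pairing θ p) :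
    0 < ∫ p, pairing θ p ∂μ := by
  refine (integral_nonneg_of_ae hnn).lt_of_ne fun hzero =>
    (hnl.variance_pairing_pos hμ hθ).ne' ?_
  have hint : Integrable (pairing θ) μ := (memLp_dual hμ (pairing θ)).integrable one_le_two
  have hae : pairing θ =ᵐ[μ] 0 := (integral_eq_zero_iff_of_nonneg_ae hnn hint).1 hzero.symm
  rw [variance_congr hae]
  exact variance_zero μ

lemma IsNonlattice.integral_fst_pos_and_integral_snd_pos [IsProbabilityMeasure μ]
    (hnl : IsNonlattice μ) (hμ : MemLp id 2 μ) (hnn : ∀ᵐ p ∂μ, 0 ≤ p.1 ∧ 0 ≤ p.2) :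
    0 < ∫ p, p.1 ∂μ ∧ 0 < ∫ p, p.2 ∂μ := by
  constructor
  · simpa [pairing_apply] using hnl.integral_pairing_pos hμ (θ := (1, 0)) (by simp)
      (hnn.mono fun p hp => by simpa [pairing_apply] using hp.1)
  · simpa [pairing_apply] using hnl.integral_pairing_pos hμ (θ := (0, 1)) (by simp)
      (hnn.mono fun p hp => by simpa [pairing_apply] using hp.2)

lemma variance_pairing_perp [IsProbabilityMeasure μ] (hμ : MemLp id 2 μ) {m : ℝ × ℝ}
    (hm : ∫ p, p ∂μ = m) :
    Var[pairing (-m.2, m.1); μ] = ∫ p, (p.2 * m.1 - p.1 * m.2) ^ 2 ∂μ := by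
  have hmean : ∫ p, pairing (-m.2, m.1) p ∂μ = 0 := by
    refine (ContinuousLinearMap.integral_comp_comm _ (hμ.integrable one_le_two)).trans ?_
    simp only [id_eq, hm, pairing_apply]
    ring
  rw [variance_of_integral_eq_zero (by fun_prop) hmean]
  congr 1 with p
  rw [pairing_apply]
  ring

end Moments

/-! ### Asymptotics of the crossing probability -/

section Asymptotics

open ProbabilityTheory

variable {ι : Type*} {l : Filter ι}

lemma tendsToAlong_of_tendsto_sub_mul_div_sqrt {m : ℝ × ℝ} (hm₁ : 0 < m.1) (hm₂ : 0 < m.2)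
    {x y : ι → ℝ} (hy : Tendsto y l atTop)
    (hxy : Tendsto (fun k => (x k - m.1 / m.2 * y k) / √(y k)) l (nhds 0)) :
    TendsToAlong (fun k => (x k, y k)) l m := by
  have hratio : Tendsto (fun k => m.2 / m.1 * x k / y k) l (nhds 1) := by
    refine tendsto_div_of_tendsto_sub_div_sqrt (t := 0) hy ?_
    refine (mul_zero (m.2 / m.1) ▸ hxy.const_mul (m.2 / m.1)).congr fun k => ?_
    field_simp
  have hpos := hy.eventually_gt_atTop 0
  have hx : Tendsto x l atTop := by
    refine ((hratio.pos_mul_atTop one_pos hy).const_mul_atTop (div_pos hm₁ hm₂)).congr' ?_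
    filter_upwards [hpos] with k hk
    field_simp
  refine ⟨hx, ?_⟩
  have hlim := (hxy.const_mul (-√(m.2 / m.1) * (m.2 / m.1))).mul (hratio.sqrt.inv₀ (by simp))
  rw [mul_zero, zero_mul] at hlim
  refine hlim.congr' ?_
  filter_upwards [hpos, hx.eventually_gt_atTop 0] with k hyk hxk
  rw [Real.sqrt_div' _ hyk.le, Real.sqrt_mul (div_pos hm₂ hm₁).le]
  have := Real.sqrt_pos.2 hyk
  have := Real.sqrt_pos.2 hxk
  have := Real.sqrt_pos.2 (div_pos hm₂ hm₁)
  field_simp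
  ring

lemma sqrt_div_sqrt_eq_inv_mul {s W : ℝ} (hs : 0 < s) (hW : 0 < W) :
    √s / √(2 * Real.pi * W) = s⁻¹ * (√(2 * Real.pi * (W / s ^ 3)))⁻¹ := by
  have hsplit : 2 * Real.pi * W = 2 * Real.pi * (W / s ^ 3) * s ^ 2 * s := by
    field_simp
  have := Real.sqrt_pos.2 hs
  rw [hsplit, Real.sqrt_mul (by positivity), Real.sqrt_mul (by positivity), Real.sqrt_sq hs.le]
  field_simp

variable {μ : Measure (ℝ × ℝ)} [IsProbabilityMeasure μ]

theorem IsNonlattice.tendsto_hoglundK_div (hnl : IsNonlattice μ) {m : ℝ × ℝ}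
    (hm : ∫ p, p ∂μ = m) (hm₀ : 0 < m.1) {ζ : ℝ × ℝ} (hζ : ζ.2 < 0)
    (hmom : Integrable (momentWeight ζ.1) μ) {a : ℝ} (ha : 0 ≤ a) (b : ℝ)
    [l.IsCountablyGenerated] {z : ι → ℝ × ℝ} (hz : TendsToAlong z l m) :
    Tendsto (fun k => (hoglundK (μ.withDensity (expWeight ζ)) a b (z k).1 (z k).2).toReal /
        ((z k).1 ^ (-(1 : ℝ) / 2) * Real.exp (pairing ζ (z k)))) l
      (nhds (√m.1 / √(2 * Real.pi * Var[pairing (-m.2, m.1); μ]) *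
        (Real.exp (b * ζ.2) / |ζ.2| *
          ∫ s in Ioi a, (μ {p | s ≤ p.1}).toReal * Real.exp (ζ.1 * s)))) := by
  have hlim := hnl.tendsto_lintegral_lintegral_crossingWeight_scaledRenewal
    (memLp_two_of_integrable_momentWeight hmom) hm hm₀ hζ hmom ha b hz
  have hfin : ENNReal.ofReal (√m.1 / √(2 * Real.pi * Var[pairing (-m.2, m.1); μ])) *
      ∫⁻ q, ∫⁻ u, crossingWeight ζ a b q u ∂volume ∂μ ≠ ∞ :=
    ENNReal.mul_ne_top ofReal_ne_top (lintegral_lintegral_crossingWeight_ne_top hζ hmom ha b)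
  have hreal := (ENNReal.tendsto_toReal hfin).comp hlim
  rw [toReal_mul, toReal_ofReal (by positivity),
    toReal_lintegral_lintegral_crossingWeight hζ] at hreal
  refine hreal.congr' ((hz.1.eventually_gt_atTop 0).mono fun k hk => ?_)
  have hK := congrArg ENNReal.toReal (ofReal_sqrt_mul_hoglundK μ ζ a b (z k).1 (z k).2)
  rw [toReal_mul, toReal_mul, toReal_ofReal (Real.sqrt_nonneg _), expWeight,
    toReal_ofReal (Real.exp_pos _).le, Prod.mk.eta] at hK
  have hpow : (z k).1 ^ (-(1 : ℝ) / 2) = (√(z k).1)⁻¹ := by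
    rw [neg_div, Real.rpow_neg hk.le, Real.sqrt_eq_rpow]
  simp only [Function.comp_apply, hpow]
  rw [_root_.eq_div_iff (by positivity)]
  have := Real.sqrt_pos.2 hk
  field_simp
  linarith

end Asymptotics

section TiltedLawConditions

variable {F : Measure (ℝ × ℝ)}

lemma ae_withDensity_nonneg (hF : F {p : ℝ × ℝ | p.1 < 0 ∨ p.2 < 0} = 0) (f : ℝ × ℝ → ℝ≥0∞) :
    ∀ᵐ p ∂(F.withDensity f), 0 ≤ p.1 ∧ 0 ≤ p.2 := by
  have hnn : ∀ᵐ p ∂F, ¬(p.1 < 0 ∨ p.2 < 0) := measure_eq_zero_iff_ae_notMem.1 hF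
  filter_upwards [(withDensity_absolutelyContinuous F f).ae_le hnn] with p hp
  simpa only [not_or, not_lt] using hp

variable {ξ η : ℝ}

lemma isNonlattice_tilted (hζ : biLaplace F ξ η = 1)
    (hG : {p : ℝ × ℝ | 0 ≤ p.1 ∧ 0 ≤ p.2} ⊆ (AddSubgroup.closure (msupport F) : Set (ℝ × ℝ))) :
    IsNonlattice
      (F.withDensity fun p => ENNReal.ofReal (Real.exp (-(ξ * p.1 + η * p.2)))) := by
  rw [← expWeight_neg (ξ, η)]
  have := isProbabilityMeasure_tilted (ζ := (ξ, η)) hζ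
  refine isNonlattice_of_closure_msupport_eq_top (addSubgroup_eq_top_of_quadrant_subset
    (hG.trans (AddSubgroup.closure_mono (msupport_mono ?_))))
  exact absolutelyContinuous_withDensity_expWeight F _

lemma integrable_momentWeight_tilted (hF : F {p : ℝ × ℝ | p.1 < 0 ∨ p.2 < 0} = 0)
    (hnbd : ∃ ε > 0, ∀ u w : ℝ, |u - ξ| < ε → |w - η| < ε → biLaplace F u w < ∞)
    (hnbd0 : ∃ ε > 0, ∀ u w : ℝ, |u| < ε → |w - η| < ε → biLaplace F u w < ∞) :
    Integrable (momentWeight ξ)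
      (F.withDensity fun p => ENNReal.ofReal (Real.exp (-(ξ * p.1 + η * p.2)))) := by
  rw [← expWeight_neg (ξ, η)]
  obtain ⟨ε, hε, hfin⟩ := hnbd
  obtain ⟨ε₀, hε₀, hfin₀⟩ := hnbd0
  obtain ⟨δ, hδ, hδmin⟩ := exists_between (lt_min hε hε₀)
  obtain ⟨hδε, hδε₀⟩ := lt_min_iff.1 hδmin
  refine integrable_momentWeight (ae_withDensity_nonneg hF _) hδ
    (integrable_exp_pairing_tilted (hfin _ _ ?_ ?_))
    (integrable_exp_pairing_tilted (hfin₀ _ _ ?_ ?_)) <;>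
  simpa only [Prod.fst_sub, Prod.snd_sub, sub_sub_cancel_left, sub_add_cancel_left, abs_neg,
    abs_of_pos hδ]

end TiltedLawConditions

theorem hoglund_renewal_K_general {F : Measure (ℝ × ℝ)}
    (hFsupp : F {p : ℝ × ℝ | p.1 < 0 ∨ p.2 < 0} = 0) {ξ η : ℝ} (hη : η < 0)
    (hζ : biLaplace F ξ η = 1) {Fζ : Measure (ℝ × ℝ)}
    (hFζ : Fζ = F.withDensity (fun p => ENNReal.ofReal (Real.exp (-(ξ * p.1 + η * p.2)))))
    (hnl : IsNonlattice Fζ) (hmom : Integrable (momentWeight ξ) Fζ) {mS mR v V : ℝ}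
    (hmS : mS = ∫ p, p.1 ∂Fζ) (hmR : mR = ∫ p, p.2 ∂Fζ) (hv : v = mS / mR)
    (hV : V = (∫ p, (p.2 * mS - p.1 * mR) ^ 2 ∂Fζ) / mS ^ 3)
    {ι : Type*} {l : Filter ι} [l.IsCountablyGenerated] :
    0 < V ∧ ∀ a b : ℝ, 0 ≤ a → ∀ x y : ι → ℝ, Tendsto y l atTop →
      Tendsto (fun k => (x k - v * y k) / √(y k)) l (nhds 0) →
      Tendsto (fun k => (hoglundK F a b (x k) (y k)).toReal /
          (x k ^ (-(1 : ℝ) / 2) * Real.exp (x k * ξ + y k * η))) l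
        (nhds ((Real.exp (b * η) / (|η| * mS) *
            ∫ s in Ioi a, (Fζ {p : ℝ × ℝ | s ≤ p.1}).toReal * Real.exp (ξ * s)) *
          (√(2 * Real.pi * V))⁻¹)) := by
  have hnn : ∀ᵐ p ∂Fζ, 0 ≤ p.1 ∧ 0 ≤ p.2 := hFζ ▸ ae_withDensity_nonneg hFsupp _
  rw [← expWeight_neg (ξ, η)] at hFζ
  have hprob : IsProbabilityMeasure Fζ := by
    rw [hFζ]
    exact isProbabilityMeasure_tilted (ζ := (ξ, η)) hζ
  have hF : F = Fζ.withDensity (expWeight (ξ, η)) := by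
    rw [hFζ, withDensity_expWeight_neg_withDensity_expWeight F (ξ, η)]
  have hL2 := memLp_two_of_integrable_momentWeight hmom
  have hmean : ∫ p, p ∂Fζ = (mS, mR) := by
    rw [hmS, hmR]
    have hint := hL2.integrable one_le_two
    exact Prod.ext (fst_integral hint) (snd_integral hint)
  obtain ⟨hS, hR⟩ : 0 < mS ∧ 0 < mR := by
    rw [hmS, hmR]
    exact hnl.integral_fst_pos_and_integral_snd_pos hL2 hnn
  have hVar := hnl.variance_pairing_pos hL2 (τ := (-mR, mS)) (by simp [hS.ne'])
  rw [← variance_pairing_perp hL2 hmean] at hV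
  refine ⟨by rw [hV]; positivity, fun a b ha x y hy hxy => ?_⟩
  rw [hv] at hxy
  have hz := tendsToAlong_of_tendsto_sub_mul_div_sqrt (m := (mS, mR)) hS hR hy hxy
  have hlim := hnl.tendsto_hoglundK_div hmean hS (ζ := (ξ, η)) hη hmom ha b hz
  rw [sqrt_div_sqrt_eq_inv_mul hS hVar, ← hV, ← hF] at hlim
  simp only [pairing_apply] at hlim
  convert hlim using 2
  · ring_nf
  · ring

/-- Höglund's two-dimensional renewal theorem, downcrossing version (`η < 0`):
under condition (G), if `φ(ζ) = 1` for `ζ = (ξ,η)` with `η < 0`, `φ` finite near `ζ`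
and near `(0,η)`, and `v = E_ζ[S₁]/E_ζ[R₁]`, then `V(ζ) > 0` and
`K_{a,b}(x_n,y_n) ∼ D(a,b) x_n^{-1/2} e^{x_n ξ + y_n η}` as `y_n → ∞`,
`x_n = v y_n + o(y_n^{1/2})`, where `D(a,b) = C(a,b) (2π V(ζ))^{-1/2}`. -/
theorem hoglund_renewal_K (F : Measure (ℝ × ℝ))
    -- `F` is a subprobability measure on `[0,∞)²`
    (hFsupp : F {p : ℝ × ℝ | p.1 < 0 ∨ p.2 < 0} = 0)
    (hFmass : F Set.univ ≤ 1)
    -- condition (G)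
    (hG : {p : ℝ × ℝ | 0 ≤ p.1 ∧ 0 ≤ p.2} ⊆
      (AddSubgroup.closure (msupport F) : Set (ℝ × ℝ)))
    (ξ η : ℝ) (hη : η < 0)
    -- `φ(ζ) = 1`
    (hζ : biLaplace F ξ η = 1)
    -- `φ` finite in a neighbourhood of `ζ` and of `(0,η)`
    (hnbd : ∃ ε > 0, ∀ u w : ℝ, |u - ξ| < ε → |w - η| < ε → biLaplace F u w < ⊤)
    (hnbd0 : ∃ ε > 0, ∀ u w : ℝ, |u| < ε → |w - η| < ε → biLaplace F u w < ⊤)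
    -- the tilted step law `F_ζ(ds,dr) = e^{-ξs-ηr} F(ds,dr)` (using `φ(ζ) = 1`)
    (Fζ : Measure (ℝ × ℝ))
    (hFζ : Fζ = F.withDensity (fun p => ENNReal.ofReal (Real.exp (-(ξ * p.1 + η * p.2)))))
    -- `mS = E_ζ[S₁]`, `mR = E_ζ[R₁]`, `v = mS/mR`, `V = V(ζ)`
    (mS mR v V : ℝ)
    (hmS : mS = ∫ p, p.1 ∂Fζ) (hmR : mR = ∫ p, p.2 ∂Fζ)
    (hv : v = mS / mR)
    (hV : V = (∫ p, (p.2 * mS - p.1 * mR) ^ 2 ∂Fζ) / mS ^ 3) :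
    0 < V ∧
    ∀ a b : ℝ, 0 ≤ a → ∀ x y : ℕ → ℝ,
      Tendsto y atTop atTop → (∀ n, 0 < x n) →
      Tendsto (fun n => (x n - v * y n) / Real.sqrt (y n)) atTop (nhds 0) →
      Tendsto (fun n => (hoglundK F a b (x n) (y n)).toReal /
          (x n ^ (-(1:ℝ) / 2) * Real.exp (x n * ξ + y n * η))) atTop
        (nhds ((Real.exp (b * η) / (|η| * mS) *
            ∫ s in Set.Ioi a, (Fζ {p : ℝ × ℝ | s ≤ p.1}).toReal * Real.exp (ξ * s)) *
          (Real.sqrt (2 * Real.pi * V))⁻¹)) := by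
  subst hFζ
  have h := hoglund_renewal_K_general (l := (atTop : Filter ℕ)) hFsupp hη hζ rfl
    (isNonlattice_tilted hζ hG) (integrable_momentWeight_tilted hFsupp hnbd hnbd0) hmS hmR hv hV
  exact ⟨h.1, fun a b ha x y hy _ hxy => h.2 a b ha x y hy hxy⟩
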